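/- arXiv:2312.11904 — 2 statements merged into one kernel-verified Lean document; each statement's English description precedes it below -/
import Mathlib

section
/- Let m ≥ 3, n ≥ 3, and let P = [m] be a chain. Then the second homological shift ideal HS_2(L(P,n)) of the co-letterplace ideal L(P,n) is not quasi-linear; in particular it does not have a linear resolution. -/
open MvPolynomial

/-- A minimal multigraded free resolution of an ideal `I`. -/
structure MinMGFreeRes (K : Type) [Field K] (σ : Type)
    (I : Ideal (MvPolynomial σ K)) where
  B : ℕ → Type
  finB : ∀ t, Finite (B t)
  deg : (t : ℕ) → B t → (σ →₀ ℕ)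
  d : (t : ℕ) →
    ((B (t + 1)) →₀ MvPolynomial σ K) →ₗ[MvPolynomial σ K]
      ((B t) →₀ MvPolynomial σ K)
  ε : ((B 0) →₀ MvPolynomial σ K) →ₗ[MvPolynomial σ K] MvPolynomial σ K
  bounded : ∃ N, ∀ t, N ≤ t → IsEmpty (B t)
  epi : LinearMap.range ε = I
  exact0 : LinearMap.ker ε = LinearMap.range (d 0)
  exact : ∀ t, LinearMap.ker (d t) = LinearMap.range (d (t + 1))
  graded_eps : ∀ b, ε (Finsupp.single b 1) = monomial (deg 0 b) 1
  graded_d : ∀ (t : ℕ) (b : B (t + 1)) (c : B t), ∃ k : K,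
    (d t (Finsupp.single b 1)) c = monomial (deg (t + 1) b - deg t c) k ∧
      (k ≠ 0 → deg t c ≤ deg (t + 1) b ∧ deg t c ≠ deg (t + 1) b)

/-- `d` is (the exponent vector of) a minimal monomial generator of `I`. -/
def IsMinGen {K : Type} [Field K] {σ : Type} (I : Ideal (MvPolynomial σ K))
    (d : σ →₀ ℕ) : Prop :=
  (monomial d (1 : K)) ∈ I ∧
    ∀ d' : σ →₀ ℕ, d' ≤ d → (monomial d' (1 : K)) ∈ I → d' = d

/-- `I` is quasi-linear: for every minimal generator `u`, the colon ideal
(ideal generated by the other minimal generators) : `u` is generated by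
variables. -/
def QuasiLinear {K : Type} [Field K] {σ : Type}
    (I : Ideal (MvPolynomial σ K)) : Prop :=
  ∀ d : σ →₀ ℕ, IsMinGen I d → ∃ S : Set σ,
    (Ideal.span {p | ∃ e : σ →₀ ℕ, IsMinGen I e ∧ e ≠ d ∧
        p = monomial e (1 : K)}).colon (Ideal.span {monomial d (1 : K)}) =
      Ideal.span ((fun s : σ => (X s : MvPolynomial σ K)) '' S)

/-!
If `I` is quasi-linear and `u ≠ v` are minimal generators, then some minimal generator other than
`u` divides `u * X x` for a variable `X x` occurring in `v` to a higher power than in `u`. A linear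
resolution provides such a step: `u` and `v` are joined by a path of linear first syzygies of
multidegree at most `lcm u v`, and its first edge is one.

Fix `lo < mid < hi` in `[n]`. For `r ∈ [m]`, the three isotone maps that jump from `lo` to `hi` at
`r` differ only in their value there, and the lcm of their monomials is a minimal generator `w r` of
`HS₂`. Let `r₀ < r₁ < r₂`, and let `X x` be a variable occurring in `w r₂` but not in `w r₀`. An
isotone map using `X x` whose monomial divides `w r₀ * X x` takes the value `lo` at `r₀`: either
`X x` forces the value `lo` to the right of `r₀`, or it forces the value `mid` at `r₂`, which is
incompatible with the value `hi` at `r₁`. Let `f` be the map that jumps at `r₀` with value `lo`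
there. Every generator of `L(P, n)` dividing `w r₀ * X x` then either divides `w r₀` or comes from
`f` modified at `x`, so the generators are covered by those dividing `w r₀` and a pair containing
the generator of `f`. At least three generators divide every second shift, so by Mayer–Vietoris the
only second shift dividing `w r₀ * X x` is `w r₀`, and there is no step from `w r₀` towards `w r₂`.
-/

section MonomialIdeals

variable {K : Type} [Field K] {σ : Type}

lemma mem_colon_span_monomial_iff {D : Set (σ →₀ ℕ)} {u : σ →₀ ℕ} {p : MvPolynomial σ K} :
    p ∈ (Ideal.span ((fun e => monomial e (1 : K)) '' D)).colon
        (Ideal.span {monomial u (1 : K)}) ↔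
      ∀ m ∈ p.support, ∃ e ∈ D, e ≤ m + u := by
  rw [Ideal.mem_colon_span_singleton, mem_ideal_span_monomial_image]
  constructor
  · intro h m hm
    refine h (m + u) ?_
    rwa [mem_support_iff, coeff_mul_monomial, mul_one, ← mem_support_iff]
  · intro h w hw
    rw [mem_support_iff, coeff_mul_monomial', mul_one] at hw
    obtain ⟨huw, hcoeff⟩ := ite_ne_right_iff.mp hw
    simpa only [tsub_add_cancel_of_le huw] using h (w - u) (mem_support_iff.mpr hcoeff)

lemma monomial_one_mem_of_le {I : Ideal (MvPolynomial σ K)} {d e : σ →₀ ℕ} (hde : d ≤ e)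
    (hd : monomial d (1 : K) ∈ I) : monomial e (1 : K) ∈ I :=
  I.mem_of_dvd (monomial_dvd_monomial.mpr ⟨Or.inr hde, one_dvd 1⟩) hd

lemma isMinGen_span_iff_minimal {D : Set (σ →₀ ℕ)} {d : σ →₀ ℕ} :
    IsMinGen (Ideal.span ((fun e => monomial e (1 : K)) '' D)) d ↔ Minimal (· ∈ D) d := by
  have hmem (a : σ →₀ ℕ) : monomial a (1 : K) ∈
      Ideal.span ((fun e => monomial e (1 : K)) '' D) ↔ ∃ e ∈ D, e ≤ a := by
    classical simp [mem_ideal_span_monomial_image, support_monomial]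
  simp only [IsMinGen, hmem]
  constructor
  · rintro ⟨⟨e, heD, hed⟩, hmin⟩
    obtain rfl := hmin e hed ⟨e, heD, le_rfl⟩
    exact ⟨heD, fun e' he' hle => (hmin e' hle ⟨e', he', le_rfl⟩).ge⟩
  · intro hd
    refine ⟨⟨d, hd.prop, le_rfl⟩, fun d' hle => ?_⟩
    rintro ⟨e, heD, hed'⟩
    exact hle.antisymm (hd.le_of_le heD (hed'.trans hle) |>.trans hed')

lemma mem_colon_isMinGen_iff {I : Ideal (MvPolynomial σ K)} {u : σ →₀ ℕ} {p : MvPolynomial σ K} :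
    p ∈ (Ideal.span {p | ∃ e, IsMinGen I e ∧ e ≠ u ∧ p = monomial e (1 : K)}).colon
        (Ideal.span {monomial u (1 : K)}) ↔
      ∀ m ∈ p.support, ∃ e, (IsMinGen I e ∧ e ≠ u) ∧ e ≤ m + u := by
  have himage : {p | ∃ e, IsMinGen I e ∧ e ≠ u ∧ p = monomial e (1 : K)} =
      (fun e => monomial e 1) '' {e | IsMinGen I e ∧ e ≠ u} := by
    ext p
    simp only [Set.mem_ofPred_eq, Set.mem_image, and_assoc, eq_comm]
  rw [himage, mem_colon_span_monomial_iff]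
  rfl

lemma QuasiLinear.exists_isMinGen_le {I : Ideal (MvPolynomial σ K)} (h : QuasiLinear I)
    {u v : σ →₀ ℕ} (hu : IsMinGen I u) (hv : IsMinGen I v) (hvu : v ≠ u) :
    ∃ x w, u x < v x ∧ IsMinGen I w ∧ w ≠ u ∧ w ≤ u + Finsupp.single x 1 := by
  classical
  obtain ⟨S, hS⟩ := h u hu
  have mem_span_iff (p : MvPolynomial σ K) :
      (∀ m ∈ p.support, ∃ e, (IsMinGen I e ∧ e ≠ u) ∧ e ≤ m + u) ↔ p ∈ Ideal.span (X '' S) :=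
    mem_colon_isMinGen_iff.symm.trans (SetLike.ext_iff.mp hS p)
  have hvS : monomial (v - u) (1 : K) ∈ Ideal.span (X '' S) := by
    refine (mem_span_iff _).mp fun m hm => ?_
    obtain rfl := Finset.mem_singleton.mp (support_monomial_subset hm)
    exact ⟨v, ⟨hv, hvu⟩, le_tsub_add⟩
  obtain ⟨x, hxS, hx⟩ := mem_ideal_span_X_image.mp hvS (v - u) (by simp [support_monomial])
  obtain ⟨w, ⟨hw, hwu⟩, hle⟩ :=
    (mem_span_iff _).mpr (Ideal.subset_span ⟨x, hxS, rfl⟩) (Finsupp.single x 1) (by simp)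
  exact ⟨x, w, tsub_pos_iff_lt.mp (Nat.pos_of_ne_zero hx), hw, hwu, add_comm u _ ▸ hle⟩

lemma quasiLinear_of_exists_isMinGen_le {I : Ideal (MvPolynomial σ K)}
    (h : ∀ u v, IsMinGen I u → IsMinGen I v → v ≠ u →
      ∃ x w, u x < v x ∧ IsMinGen I w ∧ w ≠ u ∧ w ≤ u + Finsupp.single x 1) :
    QuasiLinear I := by
  intro u hu
  refine ⟨{x | ∃ w, IsMinGen I w ∧ w ≠ u ∧ w ≤ u + Finsupp.single x 1}, ?_⟩
  ext p
  rw [mem_colon_isMinGen_iff, mem_ideal_span_X_image]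
  refine forall₂_congr fun m _ => ⟨?_, ?_⟩
  · rintro ⟨v, ⟨hv, hvu⟩, hle⟩
    obtain ⟨x, w, hx, hw⟩ := h u v hu hv hvu
    refine ⟨x, ⟨w, hw⟩, fun hmx => hx.not_ge ?_⟩
    simpa only [Finsupp.add_apply, hmx, zero_add] using hle x
  · rintro ⟨x, ⟨w, hw, hwu, hle⟩, hx⟩
    have hxm : Finsupp.single x 1 ≤ m :=
      Finsupp.single_le_iff.mpr (Nat.one_le_iff_ne_zero.mpr hx)
    exact ⟨w, ⟨hw, hwu⟩, hle.trans ((add_le_add_right hxm u).trans_eq (add_comm u m))⟩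

end MonomialIdeals

section Homogenization

variable {K : Type*} [CommRing K] {σ B : Type*}

/-- The homogeneous chain of multidegree `a` with scalar coefficients `f`: the basis element `b`,
placed in degree `deg b`, gets the coefficient `f b • X ^ (a - deg b)`. The subtraction is
truncated, so this is meaningful only for `f` supported on the basis elements of degree at most
`a`. -/
noncomputable def homogenize (deg : B → σ →₀ ℕ) (a : σ →₀ ℕ) :
    (B →₀ K) →ₗ[K] (B →₀ MvPolynomial σ K) :=
  Finsupp.lsum K fun b => Finsupp.lsingle b ∘ₗ monomial (a - deg b)

/-- The scalar coefficients of the component of multidegree `a` of a chain. Multiplying the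
coefficient of `b` by `X ^ deg b` makes the result vanish at `b` unless `deg b ≤ a`. -/
noncomputable def homogeneousPart (deg : B → σ →₀ ℕ) (a : σ →₀ ℕ) :
    (B →₀ MvPolynomial σ K) →ₗ[K] (B →₀ K) :=
  Finsupp.lsum K fun b =>
    Finsupp.lsingle b ∘ₗ lcoeff K a ∘ₗ LinearMap.mulLeft K (monomial (deg b) 1)

variable {deg : B → σ →₀ ℕ} {a : σ →₀ ℕ}

lemma homogenize_apply (f : B →₀ K) (b : B) :
    homogenize deg a f b = monomial (a - deg b) (f b) := by
  classical
  induction f using Finsupp.induction_linear with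
  | zero => simp
  | add f g hf hg => simp [hf, hg]
  | single c r => by_cases h : c = b <;> simp [homogenize, h]

lemma homogeneousPart_apply (G : B →₀ MvPolynomial σ K) (b : B) :
    homogeneousPart deg a G b = coeff a (monomial (deg b) 1 * G b) := by
  classical
  induction G using Finsupp.induction_linear with
  | zero => simp
  | add G H hG hH => simp [hG, hH, mul_add]
  | single c p => by_cases h : c = b <;> simp [homogeneousPart, h]

lemma homogeneousPart_mem_supported (G : B →₀ MvPolynomial σ K) :
    homogeneousPart deg a G ∈ Finsupp.supported K K {b | deg b ≤ a} := by
  refine (Finsupp.mem_supported' _ _).mpr fun b hb => ?_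
  rw [homogeneousPart_apply, coeff_monomial_mul']
  exact if_neg hb

section HomogeneousFunctional

variable {φ : (B →₀ MvPolynomial σ K) →ₗ[MvPolynomial σ K] MvPolynomial σ K}
  {δ : σ →₀ ℕ} {k : B → K}

lemma monomial_mul_map_single
    (hφ : ∀ b, monomial δ 1 * φ (Finsupp.single b 1) = monomial (deg b) (k b))
    (b : B) (p : MvPolynomial σ K) :
    monomial δ 1 * φ (Finsupp.single b p) = monomial (deg b) (k b) * p := by
  rw [← Finsupp.smul_single_one, map_smul, smul_eq_mul, mul_left_comm, hφ, mul_comm]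

lemma coeff_monomial_mul_map
    (hφ : ∀ b, monomial δ 1 * φ (Finsupp.single b 1) = monomial (deg b) (k b))
    (G : B →₀ MvPolynomial σ K) :
    coeff a (monomial δ 1 * φ G) = Finsupp.linearCombination K k (homogeneousPart deg a G) := by
  induction G using Finsupp.induction_linear with
  | zero => simp
  | add G H hG hH => simp only [map_add, mul_add, coeff_add, hG, hH]
  | single b p =>
    rw [monomial_mul_map_single hφ]
    simp [homogeneousPart, coeff_monomial_mul', mul_comm (k b)]

lemma monomial_mul_map_homogenize
    (hφ : ∀ b, monomial δ 1 * φ (Finsupp.single b 1) = monomial (deg b) (k b))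
    {f : B →₀ K} (hf : f ∈ Finsupp.supported K K {b | deg b ≤ a}) :
    monomial δ 1 * φ (homogenize deg a f) = monomial a (Finsupp.linearCombination K k f) := by
  rw [homogenize, Finsupp.lsum_apply, map_finsuppSum, Finsupp.mul_sum,
    Finsupp.linearCombination_apply, map_finsuppSum]
  refine Finsupp.sum_congr fun b hb => ?_
  have hba : deg b ≤ a := (Finsupp.mem_supported _ _).mp hf hb
  rw [LinearMap.comp_apply, Finsupp.lsingle_apply, monomial_mul_map_single hφ, monomial_mul,
    add_tsub_cancel_of_le hba, mul_comm, smul_eq_mul]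

end HomogeneousFunctional

lemma homogeneousPart_homogenize {f : B →₀ K}
    (hf : f ∈ Finsupp.supported K K {b | deg b ≤ a}) :
    homogeneousPart deg a (homogenize deg a f) = f := by
  classical
  ext b
  rw [homogeneousPart_apply, homogenize_apply, monomial_mul, one_mul]
  by_cases hb : deg b ≤ a
  · rw [add_tsub_cancel_of_le hb, coeff_monomial, if_pos rfl]
  · rw [(Finsupp.mem_supported' _ _).mp hf b hb, map_zero, coeff_zero]

end Homogenization

/- `σ →₀ ℕ` has no `DistribLattice` instance. -/
lemma le_of_le_sup_of_le_sup {σ : Type*} {a b c e : σ →₀ ℕ} (h : a ⊓ c ≤ b) (hab : e ≤ a ⊔ b)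
    (hbc : e ≤ b ⊔ c) : e ≤ b := by
  intro x
  have hx := h x
  have habx := hab x
  have hbcx := hbc x
  simp only [Finsupp.inf_apply, Finsupp.sup_apply] at hx habx hbcx
  omega

namespace MinMGFreeRes

variable {K : Type} [Field K] {σ : Type} {I : Ideal (MvPolynomial σ K)} (R : MinMGFreeRes K σ I)
  {t : ℕ} {a q r : σ →₀ ℕ}

/-- The augmentation `ε` of the resolution with all variables set to `1`. -/
noncomputable def augmentation : (R.B 0 →₀ K) →ₗ[K] K :=
  Finsupp.linearCombination K fun _ => 1

/-- The differential `d t` of the resolution with all variables set to `1`, so that the matrix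
entry `k • X ^ (deg b - deg c)` becomes `k`. -/
noncomputable def boundary (t : ℕ) : (R.B (t + 1) →₀ K) →ₗ[K] (R.B t →₀ K) :=
  Finsupp.linearCombination K fun b =>
    homogeneousPart (R.deg t) (R.deg (t + 1) b) (R.d t (Finsupp.single b 1))

/-- The scalar `t`-chains on basis elements of multidegree at most `a`; they correspond to the
degree `a` part of the `t`-th module of the resolution. -/
def chains (t : ℕ) (a : σ →₀ ℕ) : Submodule K (R.B t →₀ K) :=
  Finsupp.supported K K {b | R.deg t b ≤ a}

/-- The scalar cycles; those of dimension `0` are the chains of augmentation `0`. -/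
noncomputable def cycles : (t : ℕ) → Submodule K (R.B t →₀ K)
  | 0 => LinearMap.ker R.augmentation
  | t + 1 => LinearMap.ker (R.boundary t)

lemma mem_chains {f : R.B t →₀ K} : f ∈ R.chains t a ↔ ∀ c, f c ≠ 0 → R.deg t c ≤ a := by
  simp only [chains, Finsupp.mem_supported, Set.subset_def, Finset.mem_coe, Finsupp.mem_support_iff,
    Set.mem_ofPred_eq]

lemma single_mem_chains {c : R.B t} (hc : R.deg t c ≤ a) (k : K) :
    Finsupp.single c k ∈ R.chains t a :=
  Finsupp.single_mem_supported K k hc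

lemma chains_mono (haq : a ≤ q) : R.chains t a ≤ R.chains t q :=
  Finsupp.supported_mono fun _ hc => le_trans hc haq

lemma chains_inf : R.chains t (q ⊓ r) = R.chains t q ⊓ R.chains t r := by
  simp only [chains, ← Finsupp.supported_inter, le_inf_iff]
  rfl

lemma augmentation_single (c : R.B 0) (k : K) : R.augmentation (Finsupp.single c k) = k := by
  simp [augmentation]

lemma boundary_single (b : R.B (t + 1)) :
    R.boundary t (Finsupp.single b 1) =
      homogeneousPart (R.deg t) (R.deg (t + 1) b) (R.d t (Finsupp.single b 1)) := by
  simp [boundary]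

lemma boundary_apply (f : R.B (t + 1) →₀ K) (c : R.B t) :
    R.boundary t f c =
      Finsupp.linearCombination K (fun b => R.boundary t (Finsupp.single b 1) c) f := by
  simp only [boundary_single]
  exact Finsupp.apply_linearCombination K (Finsupp.lapply c) _ f

lemma monomial_mul_d_single (b : R.B (t + 1)) (c : R.B t) :
    monomial (R.deg t c) 1 * R.d t (Finsupp.single b 1) c =
      monomial (R.deg (t + 1) b) (R.boundary t (Finsupp.single b 1) c) := by
  classical
  obtain ⟨k, hk, hle⟩ := R.graded_d t b c
  rw [boundary_single, homogeneousPart_apply, hk]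
  by_cases hk0 : k = 0
  · simp [hk0]
  · rw [monomial_mul, add_tsub_cancel_of_le (hle hk0).1, coeff_monomial, if_pos rfl, one_mul]

lemma deg_lt_of_boundary_single_apply_ne_zero {b : R.B (t + 1)} {c : R.B t}
    (h : R.boundary t (Finsupp.single b 1) c ≠ 0) : R.deg t c < R.deg (t + 1) b := by
  obtain ⟨k, hk, hlt⟩ := R.graded_d t b c
  refine lt_iff_le_and_ne.mpr (hlt fun hk0 => h ?_)
  rw [boundary_single, homogeneousPart_apply, hk, hk0, map_zero, mul_zero, coeff_zero]

lemma exists_deg_lt_of_boundary_apply_ne_zero {f : R.B (t + 1) →₀ K} {c : R.B t}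
    (h : R.boundary t f c ≠ 0) : ∃ b, f b ≠ 0 ∧ R.deg t c < R.deg (t + 1) b := by
  rw [boundary_apply, Finsupp.linearCombination_apply] at h
  obtain ⟨b, -, hb⟩ := Finset.exists_ne_zero_of_sum_ne_zero h
  exact ⟨b, left_ne_zero_of_smul hb,
    R.deg_lt_of_boundary_single_apply_ne_zero (right_ne_zero_of_smul hb)⟩

lemma deg_lt_of_boundary_apply_ne_zero {f : R.B (t + 1) →₀ K} (hf : f ∈ R.chains (t + 1) a)
    {c : R.B t} (h : R.boundary t f c ≠ 0) : R.deg t c < a := by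
  obtain ⟨b, hfb, hcb⟩ := R.exists_deg_lt_of_boundary_apply_ne_zero h
  exact hcb.trans_le (R.mem_chains.mp hf b hfb)

lemma boundary_mem_chains {f : R.B (t + 1) →₀ K} (hf : f ∈ R.chains (t + 1) a) :
    R.boundary t f ∈ R.chains t a :=
  R.mem_chains.mpr fun _ hc => (R.deg_lt_of_boundary_apply_ne_zero hf hc).le

lemma homogeneousPart_d (G : R.B (t + 1) →₀ MvPolynomial σ K) :
    homogeneousPart (R.deg t) a (R.d t G) =
      R.boundary t (homogeneousPart (R.deg (t + 1)) a G) := by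
  ext c
  rw [homogeneousPart_apply, boundary_apply]
  exact coeff_monomial_mul_map (φ := Finsupp.lapply c ∘ₗ R.d t) (R.monomial_mul_d_single · c) G

lemma monomial_zero_mul_ε_single (b : R.B 0) :
    monomial 0 1 * R.ε (Finsupp.single b 1) = monomial (R.deg 0 b) 1 := by
  rw [← C_apply, C_1, one_mul, R.graded_eps]

lemma coeff_ε (G : R.B 0 →₀ MvPolynomial σ K) :
    coeff a (R.ε G) = R.augmentation (homogeneousPart (R.deg 0) a G) := by
  have h := coeff_monomial_mul_map (a := a) R.monomial_zero_mul_ε_single G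
  rwa [← C_apply, C_1, one_mul] at h

lemma boundary_single_mem_cycles (b : R.B (t + 1)) :
    R.boundary t (Finsupp.single b 1) ∈ R.cycles t := by
  have hb : R.boundary t (Finsupp.single b 1) =
      homogeneousPart (R.deg t) (R.deg (t + 1) b) (R.d t (Finsupp.single b 1)) :=
    R.boundary_single b
  cases t with
  | zero =>
    have hεd : R.ε (R.d 0 (Finsupp.single b 1)) = 0 :=
      LinearMap.mem_ker.mp (R.exact0 ▸ LinearMap.mem_range_self _ _)
    exact LinearMap.mem_ker.mpr (by rw [hb, ← coeff_ε, hεd, coeff_zero])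
  | succ t =>
    have hdd : R.d t (R.d (t + 1) (Finsupp.single b 1)) = 0 :=
      LinearMap.mem_ker.mp (R.exact t ▸ LinearMap.mem_range_self _ _)
    exact LinearMap.mem_ker.mpr (by rw [hb, ← homogeneousPart_d, hdd, map_zero])

lemma boundary_mem_cycles (f : R.B (t + 1) →₀ K) : R.boundary t f ∈ R.cycles t := by
  induction f using Finsupp.induction_linear with
  | zero => simp only [map_zero, zero_mem]
  | add f g hf hg => exact map_add (R.boundary t) f g ▸ add_mem hf hg
  | single b k =>
    rw [← Finsupp.smul_single_one, map_smul]
    exact Submodule.smul_mem _ _ (R.boundary_single_mem_cycles b)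

lemma homogenize_mem_range_d {f : R.B t →₀ K} (hf : f ∈ R.cycles t) (hfa : f ∈ R.chains t a) :
    homogenize (R.deg t) a f ∈ LinearMap.range (R.d t) := by
  cases t with
  | zero =>
    have h := monomial_mul_map_homogenize R.monomial_zero_mul_ε_single hfa
    rw [← C_apply, C_1, one_mul] at h
    rw [← R.exact0, LinearMap.mem_ker, h]
    exact (congrArg (monomial a) (LinearMap.mem_ker.mp hf)).trans (map_zero _)
  | succ t =>
    rw [← R.exact t, LinearMap.mem_ker]
    ext1 c
    have h := monomial_mul_map_homogenize (φ := Finsupp.lapply c ∘ₗ R.d t)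
      (R.monomial_mul_d_single · c) hfa
    rw [← boundary_apply, LinearMap.mem_ker.mp hf, Finsupp.zero_apply, map_zero] at h
    exact (mul_eq_zero.mp h).resolve_left (monomial_eq_zero.not.mpr one_ne_zero)

lemma exists_boundary_eq {f : R.B t →₀ K} (hf : f ∈ R.cycles t) (hfa : f ∈ R.chains t a) :
    ∃ g ∈ R.chains (t + 1) a, R.boundary t g = f := by
  obtain ⟨G, hG⟩ := R.homogenize_mem_range_d hf hfa
  refine ⟨homogeneousPart (R.deg (t + 1)) a G, homogeneousPart_mem_supported G, ?_⟩
  rw [← homogeneousPart_d, hG, homogeneousPart_homogenize hfa]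

lemma apply_eq_zero_of_mem_cycles {f : R.B t →₀ K} {b : R.B t} (hf : f ∈ R.cycles t)
    (hfb : f ∈ R.chains t (R.deg t b)) : f b = 0 := by
  obtain ⟨g, hg, rfl⟩ := R.exists_boundary_eq hf hfb
  by_contra h
  exact lt_irrefl _ (R.deg_lt_of_boundary_apply_ne_zero hg h)

lemma exists_deg_lt (b : R.B (t + 1)) : ∃ c, R.deg t c < R.deg (t + 1) b := by
  have hne : R.boundary t (Finsupp.single b 1) ≠ 0 := fun h0 => by
    have h := R.apply_eq_zero_of_mem_cycles (t := t + 1) (LinearMap.mem_ker.mpr h0)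
      (R.single_mem_chains le_rfl 1)
    exact one_ne_zero (Finsupp.single_eq_same.symm.trans h)
  obtain ⟨c, hc⟩ := Finsupp.ne_iff.mp hne
  exact ⟨c, R.deg_lt_of_boundary_single_apply_ne_zero hc⟩

lemma single_sub_single_mem_cycles (c c' : R.B 0) :
    Finsupp.single c 1 - Finsupp.single c' 1 ∈ R.cycles 0 :=
  LinearMap.mem_ker.mpr <| by simp only [map_sub, augmentation_single, sub_self]

lemma eq_of_deg_zero_le {c c' : R.B 0} (h : R.deg 0 c ≤ R.deg 0 c') : c = c' := by
  have hc' := R.apply_eq_zero_of_mem_cycles (R.single_sub_single_mem_cycles c c')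
    (sub_mem (R.single_mem_chains h 1) (R.single_mem_chains le_rfl 1))
  by_contra hne
  simp [Finsupp.single_eq_of_ne' hne] at hc'

lemma monomial_mem_iff : monomial a (1 : K) ∈ I ↔ ∃ c, R.deg 0 c ≤ a := by
  classical
  constructor
  · intro h
    obtain ⟨G, hG⟩ := LinearMap.mem_range.mp (R.epi ▸ h)
    have haug : R.augmentation (homogeneousPart (R.deg 0) a G) = 1 := by
      rw [← coeff_ε, hG, coeff_monomial, if_pos rfl]
    have hne : homogeneousPart (R.deg 0) a G ≠ 0 := fun h0 => by simp [h0] at haug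
    obtain ⟨c, hc⟩ := Finsupp.ne_iff.mp hne
    exact ⟨c, R.mem_chains.mp (homogeneousPart_mem_supported G) c hc⟩
  · rintro ⟨c, hc⟩
    refine monomial_one_mem_of_le hc ?_
    rw [← R.graded_eps]
    exact R.epi.le (LinearMap.mem_range_self _ _)

lemma isMinGen_iff : IsMinGen I a ↔ ∃ c, R.deg 0 c = a := by
  simp only [IsMinGen, R.monomial_mem_iff]
  constructor
  · rintro ⟨⟨c, hc⟩, hmin⟩
    exact ⟨c, hmin _ hc ⟨c, le_rfl⟩⟩
  · rintro ⟨c, rfl⟩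
    refine ⟨⟨c, le_rfl⟩, fun d hd => ?_⟩
    rintro ⟨c', hc'⟩
    obtain rfl := R.eq_of_deg_zero_le (hc'.trans hd)
    exact hd.antisymm hc'

lemma isMinGen_deg_zero (c : R.B 0) : IsMinGen I (R.deg 0 c) :=
  R.isMinGen_iff.mpr ⟨c, rfl⟩

/-! ### Comparing shifts with generators -/

lemma exists_add_eq_of_cover {f : R.B t →₀ K} (hf : f ∈ R.chains t a)
    (hcover : ∀ c, R.deg t c ≤ a → R.deg t c ≤ q ∨ R.deg t c ≤ r) :
    ∃ f₁ ∈ R.chains t (q ⊓ a), ∃ f₂ ∈ R.chains t (r ⊓ a), f₁ + f₂ = f := by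
  rw [← Submodule.mem_sup, chains, chains, ← Finsupp.supported_union]
  exact Finsupp.supported_mono
    (fun c hc => (hcover c hc).imp (le_inf · hc) (le_inf · hc)) hf

lemma exists_apply_ne_zero_of_augmentation_ne_zero {z : R.B 0 →₀ K}
    (hz : R.augmentation z ≠ 0) : ∃ c, z c ≠ 0 :=
  Finsupp.ne_iff.mp fun h0 : z = 0 => hz (by rw [h0, map_zero])

lemma exists_sub_mem_cycles
    (hinter : ∀ d d', IsMinGen I d → IsMinGen I d' → d ≤ q → d' ≤ r →
      monomial (q ⊓ r ⊓ (d ⊔ d')) (1 : K) ∈ I)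
    {z₁ z₂ : R.B t →₀ K} (hz₁ : z₁ ∈ R.chains t (q ⊓ a)) (hz₂ : z₂ ∈ R.chains t (r ⊓ a))
    (hz : z₁ + z₂ ∈ R.cycles t) :
    ∃ y ∈ R.chains t (q ⊓ r ⊓ a), z₁ - y ∈ R.cycles t := by
  cases t with
  | zero =>
    by_cases hz₁0 : R.augmentation z₁ = 0
    · exact ⟨0, zero_mem _, by rwa [sub_zero]⟩
    have haug : R.augmentation z₁ + R.augmentation z₂ = 0 :=
      (map_add R.augmentation z₁ z₂).symm.trans hz
    have hz₂0 : R.augmentation z₂ ≠ 0 := fun h => hz₁0 (by rwa [h, add_zero] at haug)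
    obtain ⟨c₁, hc₁⟩ := R.exists_apply_ne_zero_of_augmentation_ne_zero hz₁0
    obtain ⟨c₂, hc₂⟩ := R.exists_apply_ne_zero_of_augmentation_ne_zero hz₂0
    obtain ⟨hc₁q, hc₁a⟩ := le_inf_iff.mp (R.mem_chains.mp hz₁ c₁ hc₁)
    obtain ⟨hc₂r, hc₂a⟩ := le_inf_iff.mp (R.mem_chains.mp hz₂ c₂ hc₂)
    obtain ⟨c, hc⟩ := R.monomial_mem_iff.mp
      (hinter _ _ (R.isMinGen_deg_zero c₁) (R.isMinGen_deg_zero c₂) hc₁q hc₂r)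
    refine ⟨Finsupp.single c (R.augmentation z₁), R.single_mem_chains ?_ _, ?_⟩
    · exact hc.trans (inf_le_inf_left _ (sup_le hc₁a hc₂a))
    · exact LinearMap.mem_ker.mpr (by rw [map_sub, augmentation_single, sub_self])
  | succ t =>
    have hneg : R.boundary t z₁ = -R.boundary t z₂ :=
      eq_neg_of_add_eq_zero_left ((map_add (R.boundary t) z₁ z₂).symm.trans hz)
    have hchains : R.boundary t z₁ ∈ R.chains t (q ⊓ r ⊓ a) := by
      rw [inf_inf_distrib_right, chains_inf]
      exact ⟨R.boundary_mem_chains hz₁, hneg ▸ neg_mem (R.boundary_mem_chains hz₂)⟩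
    obtain ⟨y, hy, hyz⟩ := R.exists_boundary_eq (R.boundary_mem_cycles z₁) hchains
    exact ⟨y, hy, LinearMap.mem_ker.mpr (by rw [map_sub, hyz, sub_self])⟩

/- This is the exactness of a Mayer–Vietoris sequence: a boundary carried by two pieces splits into
one cycle on each piece, so a basis element cannot cross both. -/
theorem deg_succ_le_or_of_cover
    (hinter : ∀ d d', IsMinGen I d → IsMinGen I d' → d ≤ q → d' ≤ r →
      monomial (q ⊓ r ⊓ (d ⊔ d')) (1 : K) ∈ I)
    (b : R.B (t + 1))
    (hcover : ∀ c, R.deg t c ≤ R.deg (t + 1) b → R.deg t c ≤ q ∨ R.deg t c ≤ r) :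
    R.deg (t + 1) b ≤ q ∨ R.deg (t + 1) b ≤ r := by
  set a := R.deg (t + 1) b
  have hba : Finsupp.single b 1 ∈ R.chains (t + 1) a := R.single_mem_chains le_rfl 1
  have hcycle := R.boundary_single_mem_cycles b
  obtain ⟨z₁, hz₁, z₂, hz₂, hz⟩ := R.exists_add_eq_of_cover (R.boundary_mem_chains hba) hcover
  obtain ⟨y, hy, hcycle₁⟩ := R.exists_sub_mem_cycles hinter hz₁ hz₂ (hz ▸ hcycle)
  have hcycle₂ : z₂ + y ∈ R.cycles t := by
    have : z₂ + y = R.boundary t (Finsupp.single b 1) - (z₁ - y) := by rw [← hz]; abel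
    exact this ▸ sub_mem hcycle hcycle₁
  obtain ⟨g₁, hg₁, hg₁z⟩ := R.exists_boundary_eq hcycle₁
    (sub_mem hz₁ (R.chains_mono (inf_le_inf_right _ inf_le_left) hy))
  obtain ⟨g₂, hg₂, hg₂z⟩ := R.exists_boundary_eq hcycle₂
    (add_mem hz₂ (R.chains_mono (inf_le_inf_right _ inf_le_right) hy))
  have hb : (Finsupp.single b (1 : K) - g₁ - g₂) b = 0 := by
    refine R.apply_eq_zero_of_mem_cycles (t := t + 1) (LinearMap.mem_ker.mpr ?_)
      (sub_mem (sub_mem hba (R.chains_mono inf_le_right hg₁)) (R.chains_mono inf_le_right hg₂))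
    rw [map_sub, map_sub, hg₁z, hg₂z, ← hz]
    abel
  have hg : g₁ b ≠ 0 ∨ g₂ b ≠ 0 := by
    by_contra! h
    simp [h.1, h.2] at hb
  exact hg.imp (fun h => (le_inf_iff.mp (R.mem_chains.mp hg₁ b h)).1)
    (fun h => (le_inf_iff.mp (R.mem_chains.mp hg₂ b h)).1)

theorem deg_le_or_of_cover
    (hcover : ∀ d, IsMinGen I d → d ≤ a → d ≤ q ∨ d ≤ r)
    (hinter : ∀ d d', IsMinGen I d → IsMinGen I d' → d ≤ q → d' ≤ r →
      monomial (q ⊓ r ⊓ (d ⊔ d')) (1 : K) ∈ I)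
    (b : R.B t) (hb : R.deg t b ≤ a) : R.deg t b ≤ q ∨ R.deg t b ≤ r := by
  induction t with
  | zero => exact hcover _ (R.isMinGen_deg_zero b) hb
  | succ t ih =>
    exact R.deg_succ_le_or_of_cover hinter b fun c hc => ih c (hc.trans hb)

lemma deg_le_of_forall_isMinGen_le {b : R.B t}
    (h : ∀ d, IsMinGen I d → d ≤ R.deg t b → d ≤ q) : R.deg t b ≤ q := by
  refine or_self_iff.mp (R.deg_le_or_of_cover (fun d hd hda => Or.inl (h d hd hda)) ?_ b le_rfl)
  intro d d' hd _ hdq hd'q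
  rw [inf_idem, inf_eq_right.mpr (sup_le hdq hd'q)]
  exact monomial_one_mem_of_le le_sup_left hd.1

lemma finite_isMinGen_le (a : σ →₀ ℕ) : {d | IsMinGen I d ∧ d ≤ a}.Finite := by
  classical
  exact (Set.finite_Iic a).subset fun _ hd => hd.2

theorem succ_le_ncard_isMinGen_le (b : R.B t) :
    t + 1 ≤ {d | IsMinGen I d ∧ d ≤ R.deg t b}.ncard := by
  induction t with
  | zero =>
    exact (Set.ncard_pos (finite_isMinGen_le _)).mpr ⟨R.deg 0 b, R.isMinGen_deg_zero b, le_rfl⟩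
  | succ t ih =>
    obtain ⟨c, hcb⟩ := R.exists_deg_lt b
    refine (ih c).trans_lt (Set.ncard_lt_ncard ?_ (finite_isMinGen_le _))
    refine ⟨fun d hd => ⟨hd.1, hd.2.trans hcb.le⟩, fun hsub => hcb.not_ge ?_⟩
    exact R.deg_le_of_forall_isMinGen_le fun d hd hdb => (hsub ⟨hd, hdb⟩).2

/-! ### Low homological degrees -/

lemma exists_boundary_eq_single_sub_single (c c' : R.B 0) :
    ∃ g ∈ R.chains 1 (R.deg 0 c ⊔ R.deg 0 c'),
      R.boundary 0 g = Finsupp.single c 1 - Finsupp.single c' 1 :=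
  R.exists_boundary_eq (R.single_sub_single_mem_cycles c c')
    (sub_mem (R.single_mem_chains le_sup_left 1) (R.single_mem_chains le_sup_right 1))

lemma exists_deg_lt_of_boundary_eq_single_sub_single {c c' : R.B 0} (hne : c ≠ c')
    {g : R.B 1 →₀ K} (hg : R.boundary 0 g = Finsupp.single c 1 - Finsupp.single c' 1) :
    ∃ b, g b ≠ 0 ∧ R.deg 0 c < R.deg 1 b :=
  R.exists_deg_lt_of_boundary_apply_ne_zero (by simp [hg, Finsupp.single_eq_of_ne hne])

/- The edge paths between the three pairs form a closed path. If no second syzygy filled it, an edge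
of the first path would also lie on one of the others, which the hypotheses on meets exclude. -/
theorem exists_deg_two_le_of_three_isMinGen {d₁ d₂ d₃ : σ →₀ ℕ} (hd₁ : IsMinGen I d₁)
    (hd₂ : IsMinGen I d₂) (hd₃ : IsMinGen I d₃) (hne : d₁ ≠ d₂) (h₁₃ : d₁ ⊓ d₃ ≤ d₂)
    (h₂₃ : d₂ ⊓ d₃ ≤ d₁) : ∃ b, R.deg 2 b ≤ d₁ ⊔ d₂ ⊔ d₃ := by
  obtain ⟨c₁, rfl⟩ := R.isMinGen_iff.mp hd₁
  obtain ⟨c₂, rfl⟩ := R.isMinGen_iff.mp hd₂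
  obtain ⟨c₃, rfl⟩ := R.isMinGen_iff.mp hd₃
  set a := R.deg 0 c₁ ⊔ R.deg 0 c₂ ⊔ R.deg 0 c₃
  have hc : c₁ ≠ c₂ := ne_of_apply_ne _ hne
  obtain ⟨g, hg, hgc⟩ := R.exists_boundary_eq_single_sub_single c₁ c₂
  obtain ⟨g', hg', hgc'⟩ := R.exists_boundary_eq_single_sub_single c₂ c₃
  obtain ⟨g'', hg'', hgc''⟩ := R.exists_boundary_eq_single_sub_single c₁ c₃
  obtain ⟨b, hgb, hcb⟩ := R.exists_deg_lt_of_boundary_eq_single_sub_single hc hgc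
  have hcycle : g + g' - g'' ∈ R.cycles 1 := LinearMap.mem_ker.mpr (by
    rw [map_sub, map_add, hgc, hgc', hgc'']; abel)
  have hchain : g + g' - g'' ∈ R.chains 1 a := by
    refine sub_mem (add_mem ?_ ?_) ?_
    · exact R.chains_mono le_sup_left hg
    · exact R.chains_mono (sup_le_sup_right le_sup_right _) hg'
    · exact R.chains_mono (sup_le_sup_right le_sup_left _) hg''
  obtain ⟨h, hh, hhc⟩ := R.exists_boundary_eq hcycle hchain
  by_contra! hempty
  have hh0 : h = 0 := by
    ext e
    by_contra he
    exact hempty e (R.mem_chains.mp hh e he)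
  have hb : g' b ≠ 0 ∨ g'' b ≠ 0 := by
    by_contra! hb
    have := DFunLike.congr_fun hhc b
    simp [hh0, hb.1, hb.2, hgb.symm] at this
  have hb₁₂ := R.mem_chains.mp hg b hgb
  rcases hb with hb | hb
  · have hb₂ := le_of_le_sup_of_le_sup h₁₃ hb₁₂ (R.mem_chains.mp hg' b hb)
    exact hc (R.eq_of_deg_zero_le (hcb.le.trans hb₂))
  · rw [sup_comm] at hb₁₂
    exact hcb.not_ge (le_of_le_sup_of_le_sup h₂₃ hb₁₂ (R.mem_chains.mp hg'' b hb))

theorem quasiLinear_of_degree_eq {N : ℕ} (h₀ : ∀ c, (R.deg 0 c).degree = N)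
    (h₁ : ∀ b, (R.deg 1 b).degree = N + 1) : QuasiLinear I := by
  refine quasiLinear_of_exists_isMinGen_le fun u v hu hv hvu => ?_
  obtain ⟨c, rfl⟩ := R.isMinGen_iff.mp hu
  obtain ⟨c', rfl⟩ := R.isMinGen_iff.mp hv
  obtain ⟨g, hg, hgc⟩ := R.exists_boundary_eq_single_sub_single c c'
  obtain ⟨b, hgb, hcb⟩ := R.exists_deg_lt_of_boundary_eq_single_sub_single
    (ne_of_apply_ne _ hvu.symm) hgc
  obtain ⟨e, he⟩ := exists_add_of_le hcb.le
  obtain ⟨x, rfl⟩ : ∃ x, e = Finsupp.single x 1 := by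
    have := h₁ b
    rw [he, map_add, h₀, add_right_inj] at this
    exact (Finsupp.sum_eq_one_iff e).mp this
  obtain ⟨w, ⟨hw, hwb⟩, hwc⟩ := Set.exists_ne_of_one_lt_ncard
    (R.succ_le_ncard_isMinGen_le b) (R.deg 0 c)
  refine ⟨x, w, ?_, hw, hwc, he ▸ hwb⟩
  have hx := (he ▸ R.mem_chains.mp hg b hgb : R.deg 0 c + Finsupp.single x 1 ≤ _) x
  simpa [Nat.succ_le_iff] using hx

end MinMGFreeRes

section SquarefreeMonomials

variable {σ : Type*}

/-- The exponent vector of the squarefree monomial `∏ x ∈ s, X x`. -/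
noncomputable def sqfreeExp (s : Finset σ) : σ →₀ ℕ := ∑ x ∈ s, Finsupp.single x 1

variable {s t : Finset σ}

lemma prod_X_eq_monomial_sqfreeExp (K : Type*) [CommSemiring K] (s : Finset σ) :
    ∏ x ∈ s, X x = monomial (sqfreeExp s) (1 : K) :=
  (monomial_sum_one s _).symm

lemma sqfreeExp_insert [DecidableEq σ] {x : σ} (hx : x ∉ s) :
    sqfreeExp (insert x s) = sqfreeExp s + Finsupp.single x 1 := by
  rw [sqfreeExp, Finset.sum_insert hx, add_comm, sqfreeExp]

lemma sqfreeExp_apply [DecidableEq σ] (s : Finset σ) (x : σ) :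
    sqfreeExp s x = if x ∈ s then 1 else 0 := by
  simp [sqfreeExp, Finsupp.finsetSum_apply, Finsupp.single_apply]

lemma sqfreeExp_le_iff : sqfreeExp s ≤ sqfreeExp t ↔ s ⊆ t := by
  classical
  refine forall_congr' fun x => ?_
  simp only [sqfreeExp_apply]
  split_ifs <;> simp_all

lemma sqfreeExp_lt_apply_iff {x : σ} : sqfreeExp s x < sqfreeExp t x ↔ x ∈ t ∧ x ∉ s := by
  classical
  simp only [sqfreeExp_apply]
  split_ifs <;> simp_all

lemma sqfreeExp_inf [DecidableEq σ] (s t : Finset σ) :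
    sqfreeExp s ⊓ sqfreeExp t = sqfreeExp (s ∩ t) := by
  ext x
  simp only [Finsupp.inf_apply, sqfreeExp_apply, Finset.mem_inter]
  split_ifs <;> simp_all

lemma sqfreeExp_sup [DecidableEq σ] (s t : Finset σ) :
    sqfreeExp s ⊔ sqfreeExp t = sqfreeExp (s ∪ t) := by
  ext x
  simp only [Finsupp.sup_apply, sqfreeExp_apply, Finset.mem_union]
  split_ifs <;> simp_all

end SquarefreeMonomials

section StepMap

variable {P Q : Type*} [LinearOrder P]

/-- The map that jumps from `lo` to `hi` at `r`, where it takes the value `j`. -/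
def stepMap (lo hi : Q) (r : P) (j : Q) (i : P) : Q :=
  if i < r then lo else if i = r then j else hi

lemma stepMap_self (lo hi : Q) (r : P) (j : Q) : stepMap lo hi r j r = j := by simp [stepMap]

lemma monotone_stepMap [Preorder Q] {lo hi j : Q} (hlo : lo ≤ j) (hhi : j ≤ hi) (r : P) :
    Monotone (stepMap lo hi r j) := by
  intro i k hik
  have := hlo.trans hhi
  grind [stepMap]

end StepMap

section Graphs

variable {P Q : Type*} [Fintype P]

/-- The graph of a map out of a finite type, as a finset; it indexes the variables of the generator
of the co-letterplace ideal given by an isotone map. -/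
def finGraph (f : P → Q) : Finset (P × Q) :=
  Finset.univ.map
    ⟨fun i => (i, f i), Function.LeftInverse.injective (g := Prod.fst) fun _ => rfl⟩

lemma mem_finGraph {f : P → Q} {i : P} {j : Q} : (i, j) ∈ finGraph f ↔ f i = j := by
  simp [finGraph]

lemma finGraph_subset_iff {f : P → Q} {s : Finset (P × Q)} :
    finGraph f ⊆ s ↔ ∀ i, (i, f i) ∈ s := by
  simp only [Finset.subset_iff, Prod.forall, mem_finGraph, forall_eq']

lemma eq_of_finGraph_subset {f g : P → Q} (h : finGraph f ⊆ finGraph g) : f = g :=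
  funext fun i => (mem_finGraph.mp (finGraph_subset_iff.mp h i)).symm

lemma eq_or_eq_update_of_finGraph_subset_insert [DecidableEq P] [DecidableEq Q] {f g : P → Q}
    {i : P} {j : Q} (h : finGraph f ⊆ insert (i, j) (finGraph g)) :
    f = g ∨ f = Function.update g i j := by
  have hf (k : P) : k = i ∧ f k = j ∨ g k = f k := by
    simpa only [Finset.mem_insert, Prod.mk.injEq, mem_finGraph] using finGraph_subset_iff.mp h k
  by_cases hi : f i = g i
  · exact Or.inl (funext fun k => (hf k).elim (fun h => h.1 ▸ hi) Eq.symm)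
  · refine Or.inr (Function.eq_update_iff.mpr ⟨?_, fun k hk => ?_⟩)
    · exact ((hf i).resolve_right (Ne.symm hi)).2
    · exact ((hf k).resolve_left fun h => hk h.1).symm

variable [LinearOrder P] [DecidableEq Q]

/-- The union of the graphs of the three maps jumping from `lo` to `hi` at `r`, with value `lo`,
`mid` or `hi` there. -/
def stepSet (lo mid hi : Q) (r : P) : Finset (P × Q) :=
  finGraph (stepMap lo hi r lo) ∪ finGraph (stepMap lo hi r mid) ∪ finGraph (stepMap lo hi r hi)

variable {lo mid hi : Q} {r : P}

lemma mem_stepSet {i : P} {j : Q} : (i, j) ∈ stepSet lo mid hi r ↔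
    i < r ∧ j = lo ∨ i = r ∧ (j = lo ∨ j = mid ∨ j = hi) ∨ r < i ∧ j = hi := by
  simp only [stepSet, Finset.mem_union, mem_finGraph, stepMap]
  grind

lemma eq_stepMap_of_finGraph_subset_stepSet {f : P → Q} (h : finGraph f ⊆ stepSet lo mid hi r) :
    f = stepMap lo hi r (f r) ∧ (f r = lo ∨ f r = mid ∨ f r = hi) := by
  have hf (i : P) := mem_stepSet.mp (finGraph_subset_iff.mp h i)
  constructor
  · ext i
    have := hf i
    grind [stepMap]
  · simpa using hf r

lemma finGraph_subset_stepSet_or {i : P} {k : Q} {f : P → Q}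
    (hf : finGraph f ⊆ insert (i, k) (stepSet lo mid hi r)) (hfr : f i = k → f r = lo) :
    finGraph f ⊆ insert (i, k) (finGraph (stepMap lo hi r lo)) ∨
      finGraph f ⊆ stepSet lo mid hi r := by
  simp only [finGraph_subset_iff, Finset.mem_insert, mem_stepSet, mem_finGraph, stepMap] at hf ⊢
  by_cases hik : f i = k
  · refine Or.inl fun l => ?_
    have := hf l
    grind
  · refine Or.inr fun l => ?_
    have := hf l
    grind

lemma finGraph_stepMap_subset_inter {i : P} {k : Q} (hri : r < i) {f f' : P → Q}
    (hf : finGraph f ⊆ insert (i, k) (finGraph (stepMap lo hi r lo)))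
    (hf' : finGraph f' ⊆ stepSet lo mid hi r) :
    finGraph (stepMap lo hi r lo) ⊆
      insert (i, k) (finGraph (stepMap lo hi r lo)) ∩ stepSet lo mid hi r ∩
        (finGraph f ∪ finGraph f') := by
  simp only [finGraph_subset_iff, Finset.mem_inter, Finset.mem_insert, Finset.mem_union,
    mem_stepSet, mem_finGraph, stepMap] at hf hf' ⊢
  intro l
  have := hf l
  have := hf' l
  grind

lemma of_mem_stepSet_of_notMem_stepSet {r₀ r₂ i : P} {k : Q} (hr : r₀ < r₂)
    (h : (i, k) ∈ stepSet lo mid hi r₂) (h' : (i, k) ∉ stepSet lo mid hi r₀) :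
    r₀ < i ∧ (k = lo ∨ i = r₂ ∧ k = mid) := by
  rw [mem_stepSet] at h h'
  grind

lemma not_stepSet_subset_stepSet {r₀ r₂ : P} (hr : r₀ < r₂) (hne : lo ≠ hi) :
    ¬ stepSet lo mid hi r₂ ⊆ stepSet lo mid hi r₀ := fun h => by
  have := h (mem_stepSet.mpr (Or.inr (Or.inl ⟨rfl, Or.inl rfl⟩)) : (r₂, lo) ∈ _)
  rw [mem_stepSet] at this
  grind

lemma apply_eq_lo_of_monotone [PartialOrder Q] {r₀ r₁ r₂ i : P} {k : Q} (hlm : lo ≤ mid)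
    (hmh : mid < hi) (h₀₁ : r₀ < r₁) (h₁₂ : r₁ < r₂) {f : P → Q} (hf : Monotone f)
    (hsub : finGraph f ⊆ insert (i, k) (stepSet lo mid hi r₀)) (hfi : f i = k) (hri : r₀ < i)
    (hik : k = lo ∨ i = r₂ ∧ k = mid) : f r₀ = lo := by
  have hmem (l : P) (hl : l ≠ i) : (l, f l) ∈ stepSet lo mid hi r₀ :=
    Finset.mem_of_mem_insert_of_ne (finGraph_subset_iff.mp hsub l)
      fun h => hl (congrArg Prod.fst h)
  have hle : lo ≤ f r₀ := by
    have := hmem r₀ hri.ne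
    rw [mem_stepSet] at this
    grind
  rcases hik with rfl | ⟨rfl, rfl⟩
  · exact ((hf hri.le).trans_eq hfi).antisymm hle
  · have hf₁ : f r₁ = hi := by
      have := hmem r₁ h₁₂.ne
      rw [mem_stepSet] at this
      grind
    exact absurd (hf₁ ▸ hfi ▸ hf h₁₂.le) hmh.not_ge

end Graphs

section Generators

/-- The co-letterplace ideal `L(P, Q)`, generated by the monomials `∏ i, X (i, f i)` for isotone
maps `f : P → Q`. -/
noncomputable abbrev coLetterplaceIdeal (K : Type*) [CommSemiring K] (P Q : Type*) [Fintype P]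
    [Preorder P] [Preorder Q] : Ideal (MvPolynomial (P × Q) K) :=
  Ideal.span {p | ∃ f : P → Q, Monotone f ∧ p = ∏ i, X (i, f i)}

/-- The homological shift ideal `HS_t(I)`, generated by the monomials whose exponents are the
multidegrees of the `t`-th module of a minimal resolution of `I`. -/
noncomputable abbrev MinMGFreeRes.homologicalShiftIdeal {K : Type} [Field K] {σ : Type}
    {I : Ideal (MvPolynomial σ K)} (R : MinMGFreeRes K σ I) (t : ℕ) : Ideal (MvPolynomial σ K) :=
  Ideal.span {p | ∃ b, p = monomial (R.deg t b) 1}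

lemma MinMGFreeRes.isMinGen_homologicalShiftIdeal_iff {K : Type} [Field K] {σ : Type}
    {I : Ideal (MvPolynomial σ K)} (R : MinMGFreeRes K σ I) {t : ℕ} {a : σ →₀ ℕ} :
    IsMinGen (R.homologicalShiftIdeal t) a ↔ Minimal (· ∈ Set.range (R.deg t)) a := by
  rw [← isMinGen_span_iff_minimal (K := K), ← Set.range_comp]
  simp only [MinMGFreeRes.homologicalShiftIdeal, Set.range, eq_comm, Function.comp_apply]

variable {K : Type} [Field K] {P Q : Type} [Fintype P]

lemma isMinGen_coLetterplaceIdeal_iff [Preorder P] [Preorder Q] {d : P × Q →₀ ℕ} :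
    IsMinGen (coLetterplaceIdeal K P Q) d ↔ ∃ f, Monotone f ∧ sqfreeExp (finGraph f) = d := by
  have hI : coLetterplaceIdeal K P Q = Ideal.span ((fun e => monomial e (1 : K)) ''
      {d | ∃ f, Monotone f ∧ sqfreeExp (finGraph f) = d}) := by
    refine congrArg Ideal.span (Set.ext fun p => ?_)
    simp [← prod_X_eq_monomial_sqfreeExp, finGraph, eq_comm]
  rw [hI, isMinGen_span_iff_minimal]
  refine ⟨fun hd => hd.prop, fun hd => ⟨hd, ?_⟩⟩
  obtain ⟨f, -, rfl⟩ := hd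
  rintro - ⟨g, -, rfl⟩ hle
  rw [eq_of_finGraph_subset (sqfreeExp_le_iff.mp hle)]

lemma isMinGen_sqfreeExp_finGraph [Preorder P] [Preorder Q] {f : P → Q} (hf : Monotone f) :
    IsMinGen (coLetterplaceIdeal K P Q) (sqfreeExp (finGraph f)) :=
  isMinGen_coLetterplaceIdeal_iff.mpr ⟨f, hf, rfl⟩

end Generators

section SecondShifts

variable {K : Type} [Field K] {P Q : Type} [Fintype P]

lemma not_deg_two_le_sqfreeExp_insert_finGraph [Preorder P] [Preorder Q] [DecidableEq P]
    [DecidableEq Q] (R : MinMGFreeRes K (P × Q) (coLetterplaceIdeal K P Q)) (b : R.B 2)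
    (x : P × Q) (g : P → Q) : ¬ R.deg 2 b ≤ sqfreeExp (insert x (finGraph g)) := by
  intro hb
  have hsub : {d | IsMinGen (coLetterplaceIdeal K P Q) d ∧ d ≤ R.deg 2 b} ⊆
      ({sqfreeExp (finGraph g), sqfreeExp (finGraph (Function.update g x.1 x.2))} :
        Finset (P × Q →₀ ℕ)) := by
    rintro d ⟨hd, hdb⟩
    obtain ⟨f, -, rfl⟩ := isMinGen_coLetterplaceIdeal_iff.mp hd
    have hf := eq_or_eq_update_of_finGraph_subset_insert (sqfreeExp_le_iff.mp (hdb.trans hb))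
    rcases hf with rfl | rfl <;> simp
  have hcard := (Set.ncard_le_ncard hsub).trans (Set.ncard_coe_finset _).le
  exact absurd (R.succ_le_ncard_isMinGen_le b) (hcard.trans Finset.card_le_two).not_gt

variable [LinearOrder P] [PartialOrder Q] [DecidableEq Q]
  (R : MinMGFreeRes K (P × Q) (coLetterplaceIdeal K P Q)) {lo mid hi : Q} {r : P}

lemma deg_two_eq_of_le_sqfreeExp_stepSet {b : R.B 2}
    (hb : R.deg 2 b ≤ sqfreeExp (stepSet lo mid hi r)) :
    R.deg 2 b = sqfreeExp (stepSet lo mid hi r) := by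
  set e : Q → P × Q →₀ ℕ := fun j => sqfreeExp (finGraph (stepMap lo hi r j))
  have hsub : {d | IsMinGen (coLetterplaceIdeal K P Q) d ∧ d ≤ R.deg 2 b} ⊆
      e '' ({lo, mid, hi} : Finset Q) := by
    rintro d ⟨hd, hdb⟩
    obtain ⟨f, -, rfl⟩ := isMinGen_coLetterplaceIdeal_iff.mp hd
    obtain ⟨hf, hfr⟩ :=
      eq_stepMap_of_finGraph_subset_stepSet (sqfreeExp_le_iff.mp (hdb.trans hb))
    exact ⟨f r, by simpa using hfr, congrArg (sqfreeExp <| finGraph ·) hf.symm⟩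
  have hcard : (e '' ({lo, mid, hi} : Finset Q)).ncard ≤ 3 :=
    (Set.ncard_image_le (Finset.finite_toSet _)).trans
      (by rw [Set.ncard_coe_finset]; exact Finset.card_le_three)
  have heq := Set.eq_of_subset_of_ncard_le hsub (hcard.trans (R.succ_le_ncard_isMinGen_le b))
    ((Finset.finite_toSet _).image e)
  have hle (j : Q) (hj : j ∈ ({lo, mid, hi} : Finset Q)) : e j ≤ R.deg 2 b :=
    (heq.ge ⟨j, hj, rfl⟩).2
  refine hb.antisymm ?_
  rw [stepSet, ← sqfreeExp_sup, ← sqfreeExp_sup]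
  exact sup_le (sup_le (hle lo (by simp)) (hle mid (by simp))) (hle hi (by simp))

lemma isMinGen_homologicalShiftIdeal_stepSet (hlm : lo < mid) (hmh : mid < hi) (r : P) :
    IsMinGen (R.homologicalShiftIdeal 2) (sqfreeExp (stepSet lo mid hi r)) := by
  have hinter {j k l : Q} (hjl : j ≠ l) : sqfreeExp (finGraph (stepMap lo hi r j)) ⊓
      sqfreeExp (finGraph (stepMap lo hi r l)) ≤ sqfreeExp (finGraph (stepMap lo hi r k)) := by
    rw [sqfreeExp_inf, sqfreeExp_le_iff]
    rintro ⟨i, m⟩ him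
    simp only [Finset.mem_inter, mem_finGraph, stepMap] at him ⊢
    grind
  have hne : sqfreeExp (finGraph (stepMap lo hi r lo)) ≠
      sqfreeExp (finGraph (stepMap lo hi r mid)) := fun h => by
    have := congrFun (eq_of_finGraph_subset (sqfreeExp_le_iff.mp h.le)) r
    rw [stepMap_self, stepMap_self] at this
    exact hlm.ne this
  obtain ⟨b, hb⟩ := R.exists_deg_two_le_of_three_isMinGen
    (isMinGen_sqfreeExp_finGraph (monotone_stepMap le_rfl (hlm.trans hmh).le r))
    (isMinGen_sqfreeExp_finGraph (monotone_stepMap hlm.le hmh.le r))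
    (isMinGen_sqfreeExp_finGraph (monotone_stepMap (hlm.trans hmh).le le_rfl r))
    hne (hinter (hlm.trans hmh).ne) (hinter hmh.ne)
  rw [sqfreeExp_sup, sqfreeExp_sup, ← stepSet] at hb
  refine R.isMinGen_homologicalShiftIdeal_iff.mpr
    ⟨⟨b, deg_two_eq_of_le_sqfreeExp_stepSet R hb⟩, ?_⟩
  rintro - ⟨c, rfl⟩ hc
  exact (deg_two_eq_of_le_sqfreeExp_stepSet R hc).ge

/- The isotone maps with graph in `insert (i, k) (stepSet lo mid hi r₀)` either avoid `(i, k)` or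
differ from `stepMap lo hi r₀ lo` at most at `i`. The latter are only two maps, too few for a second
syzygy. -/
lemma deg_two_le_of_le_sqfreeExp_insert {r₀ r₁ r₂ : P} (h₀₁ : r₀ < r₁) (h₁₂ : r₁ < r₂)
    (hlm : lo < mid) (hmh : mid < hi) {x : P × Q} (hx : x ∈ stepSet lo mid hi r₂)
    (hx₀ : x ∉ stepSet lo mid hi r₀) {b : R.B 2}
    (hb : R.deg 2 b ≤ sqfreeExp (insert x (stepSet lo mid hi r₀))) :
    R.deg 2 b ≤ sqfreeExp (stepSet lo mid hi r₀) := by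
  obtain ⟨hxr, hxlo⟩ := of_mem_stepSet_of_notMem_stepSet (h₀₁.trans h₁₂) hx hx₀
  refine (R.deg_le_or_of_cover ?_ ?_ b hb).resolve_left
    (not_deg_two_le_sqfreeExp_insert_finGraph R b x (stepMap lo hi r₀ lo))
  · intro d hd hda
    obtain ⟨f, hf, rfl⟩ := isMinGen_coLetterplaceIdeal_iff.mp hd
    simp only [sqfreeExp_le_iff] at hda ⊢
    exact finGraph_subset_stepSet_or hda fun hfx =>
      apply_eq_lo_of_monotone hlm.le hmh h₀₁ h₁₂ hf hda hfx hxr hxlo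
  · intro d d' hd hd' hdq hd'r
    obtain ⟨f, -, rfl⟩ := isMinGen_coLetterplaceIdeal_iff.mp hd
    obtain ⟨f', -, rfl⟩ := isMinGen_coLetterplaceIdeal_iff.mp hd'
    have hg := isMinGen_sqfreeExp_finGraph (K := K)
      (monotone_stepMap le_rfl (hlm.trans hmh).le r₀)
    refine monomial_one_mem_of_le ?_ hg.1
    rw [sqfreeExp_inf, sqfreeExp_sup, sqfreeExp_inf, sqfreeExp_le_iff]
    exact finGraph_stepMap_subset_inter hxr (sqfreeExp_le_iff.mp hdq) (sqfreeExp_le_iff.mp hd'r)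

end SecondShifts

theorem stmt5_general (K : Type) [Field K] {P Q : Type} [Fintype P] [LinearOrder P]
    [PartialOrder Q] {r₀ r₁ r₂ : P} (h₀₁ : r₀ < r₁) (h₁₂ : r₁ < r₂) {lo mid hi : Q}
    (hlm : lo < mid) (hmh : mid < hi)
    (Res : MinMGFreeRes K (P × Q) (coLetterplaceIdeal K P Q)) :
    ¬ QuasiLinear (Res.homologicalShiftIdeal 2) ∧
      ∀ (Res2 : MinMGFreeRes K (P × Q) (Res.homologicalShiftIdeal 2)) (N : ℕ),
        ¬ ∀ (t : ℕ) (b : Res2.B t), (Res2.deg t b).degree = N + t := by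
  classical
  have hnot : ¬ QuasiLinear (Res.homologicalShiftIdeal 2) := by
    intro h
    have hmin := isMinGen_homologicalShiftIdeal_stepSet Res hlm hmh
    obtain ⟨x, w, hx, hw, hne, hle⟩ := h.exists_isMinGen_le (hmin r₀) (hmin r₂) fun heq =>
      not_stepSet_subset_stepSet (h₀₁.trans h₁₂) (hlm.trans hmh).ne (sqfreeExp_le_iff.mp heq.le)
    obtain ⟨hx₂, hx₀⟩ := sqfreeExp_lt_apply_iff.mp hx
    obtain ⟨b, rfl⟩ := (Res.isMinGen_homologicalShiftIdeal_iff.mp hw).prop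
    rw [← sqfreeExp_insert hx₀] at hle
    exact hne (deg_two_eq_of_le_sqfreeExp_stepSet Res
      (deg_two_le_of_le_sqfreeExp_insert Res h₀₁ h₁₂ hlm hmh hx₂ hx₀ hle))
  exact ⟨hnot, fun Res2 N h => hnot (Res2.quasiLinear_of_degree_eq (h 0) (h 1))⟩

/-- for `m, n ≥ 3` and `P = [m]` a chain, the second homological
shift ideal `HS₂(L(P,n))` of the co-letterplace ideal `L(P,n)` (generated by
`∏ᵢ X_{i,f(i)}` over weakly increasing `f : [m] → [n]`) is not quasi-linear;
in particular it has no linear resolution (every minimal multigraded free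
resolution of it has some shift of total degree different from `(m+2)+t`). -/
theorem stmt5 (K : Type) [Field K] (m n : ℕ) (hm : 3 ≤ m) (hn : 3 ≤ n)
    (Res : MinMGFreeRes K (Fin m × Fin n)
      (Ideal.span {p : MvPolynomial (Fin m × Fin n) K |
        ∃ f : Fin m → Fin n, Monotone f ∧ p = ∏ i : Fin m, X (i, f i)})) :
    ¬ QuasiLinear (Ideal.span {p : MvPolynomial (Fin m × Fin n) K |
        ∃ b : Res.B 2, p = monomial (Res.deg 2 b) (1 : K)}) ∧
    ∀ Res2 : MinMGFreeRes K (Fin m × Fin n)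
      (Ideal.span {p : MvPolynomial (Fin m × Fin n) K |
        ∃ b : Res.B 2, p = monomial (Res.deg 2 b) (1 : K)}),
      ¬ (∀ (t : ℕ) (b : Res2.B t),
          ((Res2.deg t b).sum fun _ e => e) = (m + 2) + t) := by
  obtain ⟨hnot, hdeg⟩ := stmt5_general K
    (r₀ := ⟨0, by omega⟩) (r₁ := ⟨1, by omega⟩) (r₂ := ⟨2, by omega⟩)
    (Fin.mk_lt_mk.mpr zero_lt_one) (Fin.mk_lt_mk.mpr one_lt_two)
    (lo := ⟨0, by omega⟩) (mid := ⟨1, by omega⟩) (hi := ⟨2, by omega⟩)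
    (Fin.mk_lt_mk.mpr zero_lt_one) (Fin.mk_lt_mk.mpr one_lt_two) Res
  exact ⟨hnot, fun Res2 => hdeg Res2 (m + 2)⟩
end

section
/- Under the standing conventions, the complex F of Construction 4.1 (free modules F_t with basis the symbols [K_1,...,K_m] satisfying: ∅ ≠ K_i ⊆ A_i, |K_1|+⋯+|K_m| = m + t, max(K_i) ≤ min(K_j) for p_i < p_j, (max K_1,...,max K_m) ∈ 𝔄; differentials as in the construction) is a minimal multigraded free resolution of the generalized co-letterplace ideal L(𝔄). -/
open MvPolynomial

noncomputable section

variable (K : Type) [Field K] (m n : ℕ)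

/-- Ambient free module with basis all symbols `[K₁,…,Kₘ]`. -/
abbrev SymbMod := (Fin m → Finset (Fin n)) →₀ MvPolynomial (Fin m × Fin n) K

/-- Sign count for the differential. -/
def sgn (Kf : Fin m → Finset (Fin n)) (i : Fin m) (a : Fin n) : ℕ :=
  (∑ j ∈ Finset.univ.filter (fun j : Fin m => j < i), (Kf j).card) +
    ((Kf i).filter (fun b => b < a)).card

/-- The differential of Construction 4.1, on the ambient free module. -/
def Dmap : SymbMod K m n →ₗ[MvPolynomial (Fin m × Fin n) K] SymbMod K m n :=
  Finsupp.linearCombination (MvPolynomial (Fin m × Fin n) K)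
    (fun Kf : Fin m → Finset (Fin n) =>
      ∑ i : Fin m, ∑ a ∈ Kf i,
        if 2 ≤ (Kf i).card then
          ((-1 : MvPolynomial (Fin m × Fin n) K) ^ (sgn m n Kf i a) *
              X (i, a)) •
            Finsupp.single (Function.update Kf i ((Kf i).erase a))
              (1 : MvPolynomial (Fin m × Fin n) K)
        else 0)

/-- Augmentation `d₀ : [K₁,…,Kₘ] ↦ X_{p₁,K₁}⋯X_{pₘ,Kₘ}`. -/
def Emap : SymbMod K m n →ₗ[MvPolynomial (Fin m × Fin n) K]
    MvPolynomial (Fin m × Fin n) K :=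
  Finsupp.linearCombination (MvPolynomial (Fin m × Fin n) K)
    (fun Kf : Fin m → Finset (Fin n) =>
      ∏ i : Fin m, ∏ a ∈ Kf i, (X (i, a) : MvPolynomial (Fin m × Fin n) K))

/-- The four conditions on a basis symbol `[K₁,…,Kₘ]` at homological degree `t`. -/
def Cond (r : Fin m → Fin m → Prop) (A : Fin m → Finset (Fin n))
    (𝔄 : Set (Fin m → Fin n)) (t : ℕ) (Kf : Fin m → Finset (Fin n)) : Prop :=
  (∀ i, Kf i ⊆ A i) ∧ (∀ i, (Kf i).Nonempty) ∧
    (∑ i, (Kf i).card) = m + t ∧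
    (∀ i j, r i j → i ≠ j → ∀ a ∈ Kf i, ∀ b ∈ Kf j, a ≤ b) ∧
    (∃ g ∈ 𝔄, ∀ i, g i ∈ Kf i ∧ ∀ a ∈ Kf i, a ≤ g i)

/-- `F t`: the free direct summand spanned by the admissible symbols at degree `t`. -/
def FMod (r : Fin m → Fin m → Prop) (A : Fin m → Finset (Fin n))
    (𝔄 : Set (Fin m → Fin n)) (t : ℕ) :
    Submodule (MvPolynomial (Fin m × Fin n) K) (SymbMod K m n) :=
  Submodule.span _ {x | ∃ Kf, Cond m n r A 𝔄 t Kf ∧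
    x = Finsupp.single Kf (1 : MvPolynomial (Fin m × Fin n) K)}

/-!
Scaling each symbol by its multidegree embeds the complex `F` into the complex with the same symbols
but all variables in the differential set to `1`. The part of `F` of multidegree `u` becomes that
complex with coefficients in `K`, on the symbols whose cells lie in the support of `u`; these are
again the symbols of a poset ideal, cut out of `𝔄` by shrinking the sets `A i`. It therefore
suffices to prove exactness with constant coefficients.

There, the poset ideal is closed under infima, so it has a least element `f₀`. Inserting `f₀ i` into
the `i`-th slot is a homotopy between the identity and the map that collapses this slot to `{f₀ i}`.
Taking the slots in the order of the linear extension keeps all symbols admissible and reduces every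
cycle to a multiple of the single symbol `[{f₀ 0}, …, {f₀ (m - 1)}]`.
-/

section Finsupp

theorem map_mem_of_mem_supported {α R M N : Type*} [Semiring R] [AddCommMonoid M] [Module R M]
    [AddCommMonoid N] [Module R N] {s : Set α} {p : Submodule R N} (f : (α →₀ M) →ₗ[R] N)
    (h : ∀ a ∈ s, ∀ c, f (Finsupp.single a c) ∈ p) {x : α →₀ M}
    (hx : x ∈ Finsupp.supported M R s) : f x ∈ p := by
  rw [← Finsupp.sum_single x, Finsupp.sum, map_sum]
  exact p.sum_mem fun a ha => h a (hx ha) _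

theorem degree_mapRange {α M N : Type*} [AddCommMonoid M] [AddCommMonoid N] (f : M →+ N)
    (x : α →₀ M) : Finsupp.degree (Finsupp.mapRange.addMonoidHom f x) = f (Finsupp.degree x) := by
  induction x using Finsupp.induction_linear with
  | zero => simp
  | add x y hx hy => simp only [map_add, hx, hy]
  | single a c => simp

theorem sum_mapRange_monomial_coeff {α σ : Type*} {R : Type*} [CommSemiring R]
    (w : α →₀ MvPolynomial σ R) {W : Finset (σ →₀ ℕ)} (hW : ∀ a, (w a).support ⊆ W) :
    ∑ u ∈ W, Finsupp.mapRange.addMonoidHom (monomial u : R →ₗ[R] _).toAddMonoidHom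
      (Finsupp.mapRange.addMonoidHom (coeffAddMonoidHom u) w) = w := by
  ext1 a
  rw [Finsupp.finsetSum_apply]
  conv_rhs => rw [← support_sum_monomial_coeff (w a)]
  refine (Finset.sum_subset (hW a) fun u _ hu => ?_).symm
  simp [notMem_support_iff.1 hu]

end Finsupp

section Symbols

variable {m n}

/-- The symbols `[K₁,…,Kₘ]`, with no condition on the `Kᵢ`. -/
abbrev Symb (m n : ℕ) := Fin m → Finset (Fin n)

namespace Symb

/-- The variables `X_{pᵢ,a}` with `a ∈ Kᵢ`, as pairs `(i, a)`. -/
def cells (S : Symb m n) : Finset (Fin m × Fin n) :=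
  Finset.univ.filter fun p => p.2 ∈ S p.1

/-- The symbol with the element `p.2` removed from the slot `p.1`. -/
protected def erase (S : Symb m n) (p : Fin m × Fin n) : Symb m n :=
  Function.update S p.1 ((S p.1).erase p.2)

/-- The symbol with the element `p.2` added to the slot `p.1`. -/
protected def insert (S : Symb m n) (p : Fin m × Fin n) : Symb m n :=
  Function.update S p.1 (insert p.2 (S p.1))

/-- The cells indexing the terms of the differential: those whose removal leaves no slot empty. -/
def removable (S : Symb m n) : Finset (Fin m × Fin n) :=
  S.cells.filter fun p => 2 ≤ (S p.1).card

/-- The sign `(-1)^σ` with which the removal of the cell `p` enters the differential. -/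
def sign (S : Symb m n) (p : Fin m × Fin n) : ℤ :=
  (-1) ^ sgn m n S p.1 p.2

@[simp] theorem mem_cells {S : Symb m n} {p : Fin m × Fin n} : p ∈ S.cells ↔ p.2 ∈ S p.1 := by
  simp [cells]

@[simp] theorem mem_removable {S : Symb m n} {p : Fin m × Fin n} :
    p ∈ S.removable ↔ p.2 ∈ S p.1 ∧ 2 ≤ (S p.1).card := by
  simp [removable]

theorem mem_erase {S : Symb m n} {p : Fin m × Fin n} {i : Fin m} {a : Fin n} :
    a ∈ S.erase p i ↔ (i, a) ≠ p ∧ a ∈ S i := by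
  obtain rfl | hi := eq_or_ne i p.1 <;> simp [Symb.erase, Prod.ext_iff, *]

theorem mem_insert {S : Symb m n} {p : Fin m × Fin n} {i : Fin m} {a : Fin n} :
    a ∈ S.insert p i ↔ (i, a) = p ∨ a ∈ S i := by
  obtain rfl | hi := eq_or_ne i p.1 <;> simp [Symb.insert, Prod.ext_iff, *]

theorem insert_erase {S : Symb m n} {p : Fin m × Fin n} (hp : p.2 ∈ S p.1) :
    (S.erase p).insert p = S := by
  ext i a
  rw [mem_insert, mem_erase]
  grind

theorem erase_insert {S : Symb m n} {p : Fin m × Fin n} (hp : p.2 ∉ S p.1) :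
    (S.insert p).erase p = S := by
  ext i a
  rw [mem_erase, mem_insert]
  grind

theorem erase_comm (S : Symb m n) (p q : Fin m × Fin n) :
    (S.erase p).erase q = (S.erase q).erase p := by
  ext i a
  simp only [mem_erase]
  tauto

theorem insert_erase_comm (S : Symb m n) {p q : Fin m × Fin n} (hpq : p ≠ q) :
    (S.erase q).insert p = (S.insert p).erase q := by
  ext i a
  simp only [mem_erase, mem_insert]
  grind

theorem cells_erase (S : Symb m n) (p : Fin m × Fin n) : (S.erase p).cells = S.cells.erase p := by
  ext q
  simp [mem_erase]

theorem card_erase_of_fst_ne (S : Symb m n) {p : Fin m × Fin n} {i : Fin m} (hi : i ≠ p.1) :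
    (S.erase p i).card = (S i).card := by
  rw [Symb.erase, Function.update_of_ne hi]

theorem card_erase_self {S : Symb m n} {p : Fin m × Fin n} (hp : p.2 ∈ S p.1) :
    (S.erase p p.1).card = (S p.1).card - 1 := by
  rw [Symb.erase, Function.update_self, Finset.card_erase_of_mem hp]

theorem card_insert_of_fst_ne (S : Symb m n) {p : Fin m × Fin n} {i : Fin m} (hi : i ≠ p.1) :
    (S.insert p i).card = (S i).card := by
  rw [Symb.insert, Function.update_of_ne hi]

theorem card_insert_self {S : Symb m n} {p : Fin m × Fin n} (hp : p.2 ∉ S p.1) :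
    (S.insert p p.1).card = (S p.1).card + 1 := by
  rw [Symb.insert, Function.update_self, Finset.card_insert_of_notMem hp]

theorem removable_erase_comm {S : Symb m n} {p q : Fin m × Fin n} :
    p ∈ S.removable ∧ q ∈ (S.erase p).removable ↔ q ∈ S.removable ∧ p ∈ (S.erase q).removable := by
  simp only [mem_removable, mem_erase]
  by_cases hp : p.2 ∈ S p.1 <;> by_cases hq : q.2 ∈ S q.1 <;> by_cases h : p.1 = q.1
  · have h₁ := card_erase_self hp
    have h₂ := card_erase_self hq
    grind
  · have h₁ := card_erase_of_fst_ne S h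
    have h₂ := card_erase_of_fst_ne S (Ne.symm h)
    grind
  all_goals grind

theorem sgn_eq_card_filter_lt (S : Symb m n) (p : Fin m × Fin n) :
    sgn m n S p.1 p.2 = (S.cells.filter fun q => toLex q < toLex p).card := by
  have hslot (j : Fin m) : (∑ a ∈ S j, if toLex (j, a) < toLex p then 1 else 0) =
      (if j < p.1 then (S j).card else 0) +
        if j = p.1 then ((S j).filter (· < p.2)).card else 0 := by
    rcases lt_trichotomy j p.1 with h | rfl | h
    · simp [Prod.Lex.toLex_lt_toLex, h, h.ne]
    · simp [Prod.Lex.toLex_lt_toLex]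
    · simp [Prod.Lex.toLex_lt_toLex, h.not_gt, h.ne']
  rw [Finset.card_filter, Finset.sum_finset_product S.cells Finset.univ S (by simp),
    Finset.sum_congr rfl fun j _ => hslot j, Finset.sum_add_distrib, Finset.sum_ite_eq' Finset.univ,
    ← Finset.sum_filter]
  simp [sgn]

theorem sign_mul_self (S : Symb m n) (p : Fin m × Fin n) : S.sign p * S.sign p = 1 := by
  rw [sign, ← mul_pow, neg_one_mul, neg_neg, one_pow]

theorem sign_erase {S : Symb m n} {p : Fin m × Fin n} (hp : p.2 ∈ S p.1) (q : Fin m × Fin n) :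
    (S.erase p).sign q = if toLex p < toLex q then -S.sign q else S.sign q := by
  simp only [sign, sgn_eq_card_filter_lt, cells_erase, Finset.filter_erase]
  split_ifs with h
  · rw [← Finset.card_erase_add_one (Finset.mem_filter.2 ⟨mem_cells.2 hp, h⟩), pow_succ]
    ring
  · rw [Finset.erase_eq_of_notMem (by simp [h])]

theorem sign_erase_self {S : Symb m n} {p : Fin m × Fin n} (hp : p.2 ∈ S p.1) :
    (S.erase p).sign p = S.sign p := by
  rw [sign_erase hp, if_neg (lt_irrefl _)]

theorem sign_insert_self {S : Symb m n} {p : Fin m × Fin n} (hp : p.2 ∉ S p.1) :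
    (S.insert p).sign p = S.sign p := by
  rw [← sign_erase_self (mem_insert.2 (.inl rfl)), erase_insert hp]

theorem sign_erase_mul_sign {S : Symb m n} {p q : Fin m × Fin n} (hpq : p ≠ q) (hp : p.2 ∈ S p.1)
    (hq : q.2 ∈ S q.1) :
    (S.erase p).sign q * S.sign p = -((S.erase q).sign p * S.sign q) := by
  rw [sign_erase hp, sign_erase hq]
  rcases lt_or_gt_of_ne (toLex.injective.ne hpq) with h | h <;> simp [h, h.not_gt, mul_comm]

theorem sign_insert_mul_sign {S : Symb m n} {p q : Fin m × Fin n} (hp : p.2 ∉ S p.1)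
    (hq : q.2 ∈ S q.1) :
    (S.insert p).sign q * S.sign p = -((S.erase q).sign p * S.sign q) := by
  have hpq : p ≠ q := by
    rintro rfl
    exact hp hq
  have hpT : p.2 ∈ S.insert p p.1 := mem_insert.2 (.inl rfl)
  have hqT : q.2 ∈ S.insert p q.1 := mem_insert.2 (.inr hq)
  have h := sign_erase_mul_sign hpq hpT hqT
  have hp' : p.2 ∉ S.erase q p.1 := fun h => hp (mem_erase.1 h).2
  rw [erase_insert hp, sign_insert_self hp, ← insert_erase_comm S hpq, sign_insert_self hp'] at h
  calc (S.insert p).sign q * S.sign p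
      = (S.sign q * S.sign q) * ((S.insert p).sign q * S.sign p) := by rw [sign_mul_self, one_mul]
    _ = S.sign q * (S.insert p).sign q * (S.sign q * S.sign p) := by ring
    _ = -((S.erase q).sign p * S.sign q) * ((S.insert p).sign q * (S.insert p).sign q) := by
      rw [h]
      ring
    _ = -((S.erase q).sign p * S.sign q) := by rw [sign_mul_self, mul_one]

theorem sign_eq_sign_of_eq_empty {S : Symb m n} {i : Fin m} (hS : S i = ∅) (a b : Fin n) :
    S.sign (i, a) = S.sign (i, b) := by
  simp [sign, sgn, hS]

theorem sign_insert_mul_sign_of_eq_singleton {S : Symb m n} {p : Fin m × Fin n} {a : Fin n}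
    (hp : p.2 ∉ S p.1) (ha : S p.1 = {a}) :
    (S.insert p).sign (p.1, a) * S.sign p = -1 := by
  have ha' : a ∈ S p.1 := by simp [ha]
  have hempty : S.erase (p.1, a) p.1 = ∅ := by simp [Symb.erase, ha]
  rw [sign_insert_mul_sign hp ha', ← sign_erase_self (p := (p.1, a)) ha',
    sign_eq_sign_of_eq_empty hempty p.2 a, sign_mul_self]

theorem erase_insert_of_eq_singleton {S : Symb m n} {p : Fin m × Fin n} {a : Fin n}
    (hp : p.2 ∉ S p.1) (ha : S p.1 = {a}) :
    (S.insert p).erase (p.1, a) = Function.update S p.1 {p.2} := by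
  have hne : p.2 ≠ a := by simpa [ha] using hp
  simp only [Symb.insert, Symb.erase, Function.update_self, Function.update_idem, ha]
  rw [Finset.erase_insert_of_ne hne, Finset.erase_singleton, insert_empty_eq]

theorem removable_insert_of_two_le {S : Symb m n} {p : Fin m × Fin n} (hp : p.2 ∉ S p.1)
    (hS : 2 ≤ (S p.1).card) : (S.insert p).removable = insert p S.removable := by
  ext q
  have h₁ := card_insert_self hp
  have h₂ (h : q.1 ≠ p.1) := card_insert_of_fst_ne S h
  simp only [mem_removable, mem_insert, Finset.mem_insert]
  grind

theorem removable_insert_of_eq_singleton {S : Symb m n} {p : Fin m × Fin n} {a : Fin n}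
    (hp : p.2 ∉ S p.1) (ha : S p.1 = {a}) :
    (S.insert p).removable = insert p (insert (p.1, a) S.removable) := by
  ext q
  have h₁ := card_insert_self hp
  have h₂ (h : q.1 ≠ p.1) := card_insert_of_fst_ne S h
  have h₃ : (S p.1).card = 1 := by simp [ha]
  simp only [mem_removable, mem_insert, Finset.mem_insert]
  grind

end Symb

end Symbols

section ConstantCoefficients

variable {m n} {M N : Type*} [AddCommGroup M] [AddCommGroup N]

namespace Symb

variable (M) in
/-- The differential of Construction 4.1 with every variable set to `1`, for coefficients in an
abelian group. -/
def boundary : (Symb m n →₀ M) →ₗ[ℤ] (Symb m n →₀ M) :=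
  Finsupp.lsum ℤ fun S => ∑ p ∈ S.removable, S.sign p • Finsupp.lsingle (S.erase p)

/-- The homotopy contracting the slot `p.1` onto `{p.2}`: signed insertion of the cell `p`, zero on
the symbols already containing it. -/
def insertion (p : Fin m × Fin n) : (Symb m n →₀ M) →ₗ[ℤ] (Symb m n →₀ M) :=
  Finsupp.lsum ℤ fun S => if p.2 ∈ S p.1 then 0 else S.sign p • Finsupp.lsingle (S.insert p)

/-- The map replacing a singleton slot `p.1` by `{p.2}` and killing the symbols in which that slot
is larger. -/
def collapse (p : Fin m × Fin n) : (Symb m n →₀ M) →ₗ[ℤ] (Symb m n →₀ M) :=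
  Finsupp.lsum ℤ fun S =>
    if (S p.1).card = 1 then Finsupp.lsingle (Function.update S p.1 {p.2}) else 0

theorem boundary_single (S : Symb m n) (c : M) :
    boundary M (Finsupp.single S c) =
      ∑ p ∈ S.removable, Finsupp.single (S.erase p) (S.sign p • c) := by
  simp [boundary]

theorem insertion_single_of_mem {p : Fin m × Fin n} {S : Symb m n} (hp : p.2 ∈ S p.1) (c : M) :
    insertion p (Finsupp.single S c) = 0 := by
  simp [insertion, hp]

theorem insertion_single_of_notMem {p : Fin m × Fin n} {S : Symb m n} (hp : p.2 ∉ S p.1) (c : M) :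
    insertion p (Finsupp.single S c) = Finsupp.single (S.insert p) (S.sign p • c) := by
  simp [insertion, hp]

theorem collapse_single_of_card_eq_one {p : Fin m × Fin n} {S : Symb m n}
    (hS : (S p.1).card = 1) (c : M) :
    collapse p (Finsupp.single S c) = Finsupp.single (Function.update S p.1 {p.2}) c := by
  simp [collapse, hS]

theorem collapse_single_of_card_ne_one {p : Fin m × Fin n} {S : Symb m n}
    (hS : (S p.1).card ≠ 1) (c : M) :
    collapse p (Finsupp.single S c) = 0 := by
  simp [collapse, hS]

theorem boundary_boundary (x : Symb m n →₀ M) : boundary M (boundary M x) = 0 := by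
  induction x using Finsupp.induction_linear with
  | zero => simp
  | add x y hx hy => rw [map_add, map_add, hx, hy, add_zero]
  | single S c =>
    simp only [boundary_single, map_sum, smul_smul]
    rw [Finset.sum_sigma']
    refine Finset.sum_involution (fun x _ => ⟨x.2, x.1⟩) ?_ ?_ ?_ fun _ _ => rfl
    all_goals
      rintro ⟨p, q⟩ hpq
      rw [Finset.mem_sigma] at hpq
      obtain ⟨hp, hq⟩ := hpq
      have hne : q ≠ p := fun h => (mem_erase.1 (mem_removable.1 hq).1).1 h
      have hqS := (mem_erase.1 (mem_removable.1 hq).1).2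
    · dsimp only
      rw [erase_comm S q p, ← Finsupp.single_add, ← add_smul,
        sign_erase_mul_sign hne hqS (mem_removable.1 hp).1, add_neg_cancel, zero_smul,
        Finsupp.single_zero]
    · exact fun _ h => hne (congrArg Sigma.fst h)
    · exact Finset.mem_sigma.2 (removable_erase_comm.1 ⟨hp, hq⟩)

theorem insertion_boundary_single_of_mem {p : Fin m × Fin n} {S : Symb m n} (hp : p.2 ∈ S p.1)
    (c : M) :
    insertion p (boundary M (Finsupp.single S c)) =
      if p ∈ S.removable then Finsupp.single S c else 0 := by
  have hterm (q : Fin m × Fin n) (_ : q ∈ S.removable) :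
      insertion p (Finsupp.single (S.erase q) (S.sign q • c)) =
        if p = q then Finsupp.single S c else 0 := by
    split_ifs with hpq
    · subst hpq
      rw [insertion_single_of_notMem (by simp [mem_erase]), insert_erase hp, sign_erase_self hp,
        smul_smul, sign_mul_self, one_smul]
    · exact insertion_single_of_mem (mem_erase.2 ⟨hpq, hp⟩) _
  rw [boundary_single, map_sum, Finset.sum_congr rfl hterm, Finset.sum_ite_eq]

theorem boundary_insertion_single_of_notMem {p : Fin m × Fin n} {S : Symb m n}
    (hp : p.2 ∉ S p.1) (c : M) :
    boundary M (insertion p (Finsupp.single S c)) = ∑ q ∈ (S.insert p).removable,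
      Finsupp.single ((S.insert p).erase q) (((S.insert p).sign q * S.sign p) • c) := by
  simp only [insertion_single_of_notMem hp, boundary_single, smul_smul]

theorem insertion_boundary_single_of_notMem {p : Fin m × Fin n} {S : Symb m n}
    (hp : p.2 ∉ S p.1) (c : M) :
    insertion p (boundary M (Finsupp.single S c)) = -∑ q ∈ S.removable,
      Finsupp.single ((S.insert p).erase q) (((S.insert p).sign q * S.sign p) • c) := by
  rw [boundary_single, map_sum, ← Finset.sum_neg_distrib]
  refine Finset.sum_congr rfl fun q hq => ?_
  have hqS := (mem_removable.1 hq).1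
  have hpq : p ≠ q := by
    rintro rfl
    exact hp hqS
  rw [insertion_single_of_notMem fun h => hp (mem_erase.1 h).2, insert_erase_comm S hpq, smul_smul,
    sign_insert_mul_sign hp hqS, neg_smul, Finsupp.single_neg, neg_neg]

theorem boundary_insertion_add_insertion_boundary_single {p : Fin m × Fin n} {S : Symb m n}
    (hS : (S p.1).Nonempty) (c : M) :
    boundary M (insertion p (Finsupp.single S c)) + insertion p (boundary M (Finsupp.single S c)) =
      Finsupp.single S c - collapse p (Finsupp.single S c) := by
  by_cases hp : p.2 ∈ S p.1
  · rw [insertion_single_of_mem hp, map_zero, zero_add, insertion_boundary_single_of_mem hp]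
    by_cases h : (S p.1).card = 1
    · have hslot : S p.1 = {p.2} := (Finset.eq_of_subset_of_card_le (by simpa) (by simp [h])).symm
      rw [collapse_single_of_card_eq_one h, ← hslot, Function.update_eq_self, sub_self,
        if_neg (by simp [h])]
    · rw [collapse_single_of_card_ne_one h, sub_zero, if_pos]
      exact mem_removable.2 ⟨hp, by have := hS.card_pos; omega⟩
  · have hpS : p ∉ S.removable := fun h => hp (mem_removable.1 h).1
    rw [boundary_insertion_single_of_notMem hp, insertion_boundary_single_of_notMem hp]
    by_cases h : (S p.1).card = 1
    · obtain ⟨a, ha⟩ := Finset.card_eq_one.1 h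
      have hpa : p ≠ (p.1, a) := fun h => hp (by rw [ha, congrArg Prod.snd h]; simp)
      rw [removable_insert_of_eq_singleton hp ha, Finset.sum_insert (by simp [hp, hpa]),
        Finset.sum_insert (by simp [h]), collapse_single_of_card_eq_one h, erase_insert hp,
        sign_insert_self hp, sign_mul_self, erase_insert_of_eq_singleton hp ha,
        sign_insert_mul_sign_of_eq_singleton hp ha, one_smul, neg_one_smul, Finsupp.single_neg]
      abel
    · rw [removable_insert_of_two_le hp (by have := hS.card_pos; omega), Finset.sum_insert hpS,
        collapse_single_of_card_ne_one h, erase_insert hp, sign_insert_self hp, sign_mul_self,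
        one_smul]
      abel

theorem boundary_insertion_add_insertion_boundary {p : Fin m × Fin n} {x : Symb m n →₀ M}
    (hx : x ∈ Finsupp.supported M ℤ {S | (S p.1).Nonempty}) :
    boundary M (insertion p x) + insertion p (boundary M x) = x - collapse p x := by
  have h := map_mem_of_mem_supported (p := ⊥)
    (boundary M ∘ₗ insertion p + insertion p ∘ₗ boundary M - (LinearMap.id - collapse p))
    (fun S hS c => by
      simpa [sub_eq_zero] using boundary_insertion_add_insertion_boundary_single hS c) hx
  simpa [sub_eq_zero] using h

theorem degree_collapse {p : Fin m × Fin n} {x : Symb m n →₀ M}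
    (hx : x ∈ Finsupp.supported M ℤ {S | (S p.1).card = 1}) :
    Finsupp.degree (collapse p x) = Finsupp.degree x := by
  have h := map_mem_of_mem_supported (p := ⊥)
    (Finsupp.degree.toIntLinearMap ∘ₗ collapse p - Finsupp.degree.toIntLinearMap)
    (fun S hS c => by simp [collapse_single_of_card_eq_one hS]) hx
  simpa [sub_eq_zero] using h

theorem boundary_mapRange (f : M →+ N) (x : Symb m n →₀ M) :
    boundary N (Finsupp.mapRange.addMonoidHom f x) =
      Finsupp.mapRange.addMonoidHom f (boundary M x) := by
  induction x using Finsupp.induction_linear with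
  | zero => simp
  | add x y hx hy => simp only [map_add, hx, hy]
  | single S c => simp [boundary_single]

end Symb

end ConstantCoefficients

section PosetIdeal

variable {m n} {r : Fin m → Fin m → Prop} {A : Fin m → Finset (Fin n)}
  {𝔄 : Set (Fin m → Fin n)}

/-- `𝔄` is a poset ideal of `Hom(P, A)`, where `r` is the order relation of `P`. -/
structure IsPosetIdeal (r : Fin m → Fin m → Prop) (A : Fin m → Finset (Fin n))
    (𝔄 : Set (Fin m → Fin n)) : Prop where
  mem : ∀ f ∈ 𝔄, ∀ i, f i ∈ A i
  mono : ∀ f ∈ 𝔄, ∀ i j, r i j → f i ≤ f j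
  down : ∀ f ∈ 𝔄, ∀ g : Fin m → Fin n, (∀ i, g i ∈ A i) → (∀ i j, r i j → g i ≤ g j) →
    (∀ i, g i ≤ f i) → g ∈ 𝔄

namespace IsPosetIdeal

theorem infClosed (h𝔄 : IsPosetIdeal r A 𝔄) : InfClosed 𝔄 := by
  intro f hf g hg
  refine h𝔄.down f hf _ (fun i => ?_)
    (fun i j hij => inf_le_inf (h𝔄.mono f hf i j hij) (h𝔄.mono g hg i j hij)) fun _ => inf_le_left
  rw [Pi.inf_apply]
  rcases min_choice (f i) (g i) with h | h <;> rw [h]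
  exacts [h𝔄.mem f hf i, h𝔄.mem g hg i]

theorem exists_isLeast (h𝔄 : IsPosetIdeal r A 𝔄) (hne : 𝔄.Nonempty) : ∃ f, IsLeast 𝔄 f := by
  have hfin : 𝔄.Finite := 𝔄.toFinite
  have hne' : hfin.toFinset.Nonempty := by simpa using hne
  refine ⟨hfin.toFinset.inf' hne' id, ?_, fun f hf => ?_⟩
  · exact h𝔄.infClosed.finsetInf'_mem hne' (by simp)
  · exact Finset.inf'_le id (by simpa using hf)

theorem restrict (h𝔄 : IsPosetIdeal r A 𝔄) {U : Fin m → Finset (Fin n)} (hU : ∀ i, U i ⊆ A i) :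
    IsPosetIdeal r U {f ∈ 𝔄 | ∀ i, f i ∈ U i} where
  mem _ hf := hf.2
  mono f hf := h𝔄.mono f hf.1
  down f hf g hg hmono hle := ⟨h𝔄.down f hf.1 g (fun i => hU i (hg i)) hmono hle, hg⟩

end IsPosetIdeal

namespace Cond

variable {s t : ℕ} {S : Symb m n}

theorem restrict_iff {U : Fin m → Finset (Fin n)} (hU : ∀ i, U i ⊆ A i) :
    Cond m n r U {f ∈ 𝔄 | ∀ i, f i ∈ U i} t S ↔ Cond m n r A 𝔄 t S ∧ ∀ i, S i ⊆ U i := by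
  constructor
  · rintro ⟨hS, hne, hcard, hord, g, hg, hmax⟩
    exact ⟨⟨fun i => (hS i).trans (hU i), hne, hcard, hord, g, hg.1, hmax⟩, hS⟩
  · rintro ⟨⟨-, hne, hcard, hord, g, hg, hmax⟩, hS⟩
    exact ⟨hS, hne, hcard, hord, g, ⟨hg, fun i => hS i (hmax i).1⟩, hmax⟩

theorem card_eq_one (hS : Cond m n r A 𝔄 0 S) (i : Fin m) : (S i).card = 1 := by
  obtain ⟨-, hne, hcard, -⟩ := hS
  have hsum : ∑ _i : Fin m, 1 = ∑ i, (S i).card := by simp [hcard]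
  have hle : ∀ j ∈ Finset.univ, 1 ≤ (S j).card := fun j _ => (hne j).card_pos
  exact ((Finset.sum_eq_sum_iff_of_le hle).1 hsum i (Finset.mem_univ i)).symm

theorem zero_iff (h𝔄 : IsPosetIdeal r A 𝔄) :
    Cond m n r A 𝔄 0 S ↔ ∃ f ∈ 𝔄, S = fun i => {f i} := by
  constructor
  · intro hS
    obtain ⟨g, hg, hmax⟩ := hS.2.2.2.2
    refine ⟨g, hg, funext fun i => ?_⟩
    obtain ⟨a, ha⟩ := Finset.card_eq_one.1 (hS.card_eq_one i)
    have hga := (hmax i).1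
    rw [ha, Finset.mem_singleton] at hga
    rw [ha, hga]
  · rintro ⟨f, hf, rfl⟩
    refine ⟨fun i => by simpa using h𝔄.mem f hf i, fun i => Finset.singleton_nonempty _, by simp,
      fun i j hij _ => by simpa using h𝔄.mono f hf i j hij, f, hf, fun i => by simp⟩

theorem le_of_mem_lowerBounds (h𝔄 : IsPosetIdeal r A 𝔄) {f₀ : Fin m → Fin n}
    (hf₀ : f₀ ∈ lowerBounds 𝔄) (hS : Cond m n r A 𝔄 t S) {i : Fin m} {a : Fin n}
    (ha : a ∈ S i) : f₀ i ≤ a := by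
  obtain ⟨hSA, -, -, hord, g, hg, hmax⟩ := hS
  have hupdS : ∀ j, Function.update g i a j ∈ S j :=
    (Function.forall_update_iff g fun j b => b ∈ S j).2 ⟨ha, fun j _ => (hmax j).1⟩
  have hupd : Function.update g i a ∈ 𝔄 := by
    refine h𝔄.down g hg _ (fun j => hSA j (hupdS j)) (fun j k hjk => ?_)
      ((Function.forall_update_iff g fun j b => b ≤ g j).2 ⟨(hmax i).2 a ha, fun _ _ => le_rfl⟩)
    obtain rfl | hne := eq_or_ne j k
    · exact le_rfl
    · exact hord j k hjk hne _ (hupdS j) _ (hupdS k)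
  simpa using hf₀ hupd i

theorem exists_max_mem (h𝔄 : IsPosetIdeal r A 𝔄) (hSA : ∀ i, S i ⊆ A i)
    (hne : ∀ i, (S i).Nonempty) (hord : ∀ i j, r i j → i ≠ j → ∀ a ∈ S i, ∀ b ∈ S j, a ≤ b)
    {g : Fin m → Fin n} (hg : g ∈ 𝔄) (hSg : ∀ i, ∀ a ∈ S i, a ≤ g i) :
    ∃ g ∈ 𝔄, ∀ i, g i ∈ S i ∧ ∀ a ∈ S i, a ≤ g i := by
  have hmax (i : Fin m) : (S i).max' (hne i) ∈ S i := Finset.max'_mem _ _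
  refine ⟨fun i => (S i).max' (hne i), ?_, fun i => ⟨hmax i, Finset.le_max' _⟩⟩
  refine h𝔄.down g hg _ (fun i => hSA i (hmax i)) (fun i j hij => ?_) fun i => hSg i _ (hmax i)
  obtain rfl | h := eq_or_ne i j
  · exact le_rfl
  · exact hord i j hij h _ (hmax i) _ (hmax j)

theorem update (h𝔄 : IsPosetIdeal r A 𝔄) (hS : Cond m n r A 𝔄 t S) {i : Fin m}
    {L : Finset (Fin n)} (hLA : L ⊆ A i) (hL : L.Nonempty) (hcard : t + L.card = s + (S i).card)
    (hlower : ∀ j, r j i → j ≠ i → ∀ a ∈ S j, ∀ b ∈ L, a ≤ b) (hupper : ∀ b ∈ L, ∃ a ∈ S i, b ≤ a) :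
    Cond m n r A 𝔄 s (Function.update S i L) := by
  obtain ⟨hSA, hne, hsum, hord, g, hg, hmax⟩ := hS
  have hSA' := (Function.forall_update_iff S fun j T => T ⊆ A j).2 ⟨hLA, fun j _ => hSA j⟩
  have hne' : ∀ j, (Function.update S i L j).Nonempty :=
    (Function.forall_update_iff S fun _ T => T.Nonempty).2 ⟨hL, fun j _ => hne j⟩
  have hle : ∀ j, ∀ b ∈ Function.update S i L j, ∃ a ∈ S j, b ≤ a :=
    (Function.forall_update_iff S fun j T => ∀ b ∈ T, ∃ a ∈ S j, b ≤ a).2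
      ⟨hupper, fun j _ b hb => ⟨b, hb, le_rfl⟩⟩
  have hord' (j k : Fin m) (hjk : r j k) (hjk' : j ≠ k) :
      ∀ a ∈ Function.update S i L j, ∀ b ∈ Function.update S i L k, a ≤ b := by
    intro a ha b hb
    obtain rfl | hk := eq_or_ne k i
    · rw [Function.update_of_ne hjk'] at ha
      rw [Function.update_self] at hb
      exact hlower j hjk hjk' a ha b hb
    · rw [Function.update_of_ne hk] at hb
      obtain ⟨c, hc, hac⟩ := hle j a ha
      exact hac.trans (hord j k hjk hjk' c hc b hb)
  refine ⟨hSA', hne', ?_, hord', exists_max_mem h𝔄 hSA' hne' hord' hg fun j b hb => ?_⟩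
  · have hupd : (fun j => (Function.update S i L j).card) =
        Function.update (fun j => (S j).card) i L.card :=
      funext fun j => Function.apply_update (fun _ T => T.card) S i L j
    have := Finset.add_sum_erase Finset.univ (fun j => (S j).card) (Finset.mem_univ i)
    rw [hupd, Finset.sum_update_of_mem (Finset.mem_univ i), ← Finset.erase_eq]
    omega
  · obtain ⟨a, ha, hba⟩ := hle j b hb
    exact hba.trans ((hmax j).2 a ha)

theorem erase (h𝔄 : IsPosetIdeal r A 𝔄) (hS : Cond m n r A 𝔄 (t + 1) S) {p : Fin m × Fin n}
    (hp : p ∈ S.removable) : Cond m n r A 𝔄 t (S.erase p) := by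
  obtain ⟨hpS, hcard⟩ := Symb.mem_removable.1 hp
  have hcard' := Finset.card_erase_add_one hpS
  refine hS.update h𝔄 ((Finset.erase_subset _ _).trans (hS.1 _)) ?_ (by omega) ?_ ?_
  · exact Finset.card_pos.1 (by omega)
  · exact fun j hj hne a ha b hb =>
      hS.2.2.2.1 j p.1 hj hne a ha b (Finset.mem_of_mem_erase hb)
  · exact fun b hb => ⟨b, Finset.mem_of_mem_erase hb, le_rfl⟩

section Least

variable {f₀ : Fin m → Fin n} {i : Fin m}

theorem insert (h𝔄 : IsPosetIdeal r A 𝔄) (hf₀ : IsLeast 𝔄 f₀) (hS : Cond m n r A 𝔄 t S)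
    (hlower : ∀ j, r j i → j ≠ i → ∀ a ∈ S j, a ≤ f₀ i) (hi : f₀ i ∉ S i) :
    Cond m n r A 𝔄 (t + 1) (S.insert (i, f₀ i)) := by
  refine hS.update h𝔄 (Finset.insert_subset (h𝔄.mem f₀ hf₀.1 i) (hS.1 i))
    (Finset.insert_nonempty _ _) ?_ ?_ ?_
  · rw [Finset.card_insert_of_notMem hi, add_right_comm, add_assoc]
  · intro j hj hne a ha
    exact Finset.forall_mem_insert _ _ _ |>.2 ⟨hlower j hj hne a ha, hS.2.2.2.1 j i hj hne a ha⟩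
  · obtain ⟨a, ha⟩ := hS.2.1 i
    exact Finset.forall_mem_insert _ _ _ |>.2
      ⟨⟨a, ha, hS.le_of_mem_lowerBounds h𝔄 hf₀.2 ha⟩, fun b hb => ⟨b, hb, le_rfl⟩⟩

theorem update_singleton (h𝔄 : IsPosetIdeal r A 𝔄) (hf₀ : IsLeast 𝔄 f₀)
    (hS : Cond m n r A 𝔄 t S) (hlower : ∀ j, r j i → j ≠ i → ∀ a ∈ S j, a ≤ f₀ i)
    (hi : (S i).card = 1) : Cond m n r A 𝔄 t (Function.update S i {f₀ i}) := by
  refine hS.update h𝔄 (by simpa using h𝔄.mem f₀ hf₀.1 i) (Finset.singleton_nonempty _)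
    (by simp [hi]) (by simpa using hlower) ?_
  obtain ⟨a, ha⟩ := hS.2.1 i
  simpa using ⟨a, ha, hS.le_of_mem_lowerBounds h𝔄 hf₀.2 ha⟩

end Least

end Cond

end PosetIdeal

section Exactness

variable {m n} {M : Type*} [AddCommGroup M] {r : Fin m → Fin m → Prop}
  {A : Fin m → Finset (Fin n)} {𝔄 : Set (Fin m → Fin n)} {f₀ : Fin m → Fin n} {t : ℕ}

namespace Symb

/-- The admissible symbols of homological degree `t` whose first `k` slots are `{f₀ 0}`, `{f₀ 1}`,
and so on. The exactness proof moves cycles from stage `k` to stage `k + 1`. -/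
def contracted (r : Fin m → Fin m → Prop) (A : Fin m → Finset (Fin n)) (𝔄 : Set (Fin m → Fin n))
    (f₀ : Fin m → Fin n) (t k : ℕ) : Set (Symb m n) :=
  {S | Cond m n r A 𝔄 t S ∧ ∀ j : Fin m, (j : ℕ) < k → S j = {f₀ j}}

theorem le_of_mem_contracted (hcompat : ∀ i j, r i j → i ≤ j)
    (h𝔄 : IsPosetIdeal r A 𝔄) (hf₀ : f₀ ∈ 𝔄) {i : Fin m} {S : Symb m n}
    (hS : S ∈ contracted r A 𝔄 f₀ t i) (j : Fin m) (hji : r j i) (hne : j ≠ i) :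
    ∀ a ∈ S j, a ≤ f₀ i := by
  have hlt : j < i := lt_of_le_of_ne (hcompat j i hji) hne
  rw [hS.2 j hlt]
  simpa using h𝔄.mono f₀ hf₀ j i hji

theorem insertion_mem_supported (hcompat : ∀ i j, r i j → i ≤ j) (h𝔄 : IsPosetIdeal r A 𝔄)
    (hf₀ : IsLeast 𝔄 f₀) {i : Fin m} {x : Symb m n →₀ M}
    (hx : x ∈ Finsupp.supported M ℤ (contracted r A 𝔄 f₀ t i)) :
    insertion (i, f₀ i) x ∈ Finsupp.supported M ℤ {S | Cond m n r A 𝔄 (t + 1) S} := by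
  refine map_mem_of_mem_supported _ (fun S hS c => ?_) hx
  by_cases hi : f₀ i ∈ S i
  · rw [insertion_single_of_mem hi]
    exact zero_mem _
  · rw [insertion_single_of_notMem hi]
    exact Finsupp.single_mem_supported _ _
      (hS.1.insert h𝔄 hf₀ (le_of_mem_contracted hcompat h𝔄 hf₀.1 hS) hi)

theorem collapse_mem_supported (hcompat : ∀ i j, r i j → i ≤ j) (h𝔄 : IsPosetIdeal r A 𝔄)
    (hf₀ : IsLeast 𝔄 f₀) {i : Fin m} {x : Symb m n →₀ M}
    (hx : x ∈ Finsupp.supported M ℤ (contracted r A 𝔄 f₀ t i)) :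
    collapse (i, f₀ i) x ∈ Finsupp.supported M ℤ (contracted r A 𝔄 f₀ t (i + 1)) := by
  refine map_mem_of_mem_supported _ (fun S hS c => ?_) hx
  by_cases hi : (S i).card = 1
  · rw [collapse_single_of_card_eq_one hi]
    refine Finsupp.single_mem_supported _ _
      ⟨hS.1.update_singleton h𝔄 hf₀ (le_of_mem_contracted hcompat h𝔄 hf₀.1 hS) hi, ?_⟩
    refine (Function.forall_update_iff S fun j T => (j : ℕ) < i + 1 → T = {f₀ j}).2
      ⟨fun _ => rfl, fun j hj hlt => hS.2 j ?_⟩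
    exact lt_of_le_of_ne (Nat.lt_succ_iff.1 hlt) (Fin.val_ne_of_ne hj)
  · rw [collapse_single_of_card_ne_one hi]
    exact zero_mem _

theorem eq_zero_of_mem_supported_contracted {x : Symb m n →₀ M}
    (hx : x ∈ Finsupp.supported M ℤ (contracted r A 𝔄 f₀ t m))
    (hdeg : t = 0 → Finsupp.degree x = 0) : x = 0 := by
  have hsymb {S : Symb m n} (hS : S ∈ contracted r A 𝔄 f₀ t m) : (S = fun i => {f₀ i}) ∧ t = 0 := by
    have hSf : S = fun i => {f₀ i} := funext fun i => hS.2 i i.isLt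
    have hcard := hS.1.2.2.1
    simp only [hSf, Finset.card_singleton, Finset.sum_const, Finset.card_univ, Fintype.card_fin,
      smul_eq_mul, mul_one] at hcard
    exact ⟨hSf, by omega⟩
  by_cases ht : t = 0
  · obtain ⟨c, rfl⟩ := Finsupp.support_subset_singleton'.1
      (show x.support ⊆ {(fun i => {f₀ i} : Symb m n)} from
        fun S hS => Finset.mem_singleton.2 (hsymb (hx hS)).1)
    rw [Finsupp.degree_single] at hdeg
    rw [hdeg ht, Finsupp.single_zero]
  · exact Finsupp.support_eq_empty.1
      (Finset.eq_empty_of_forall_notMem fun S hS => ht (hsymb (hx hS)).2)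

theorem exists_boundary_eq_of_mem_supported_contracted (hcompat : ∀ i j, r i j → i ≤ j)
    (h𝔄 : IsPosetIdeal r A 𝔄) (hf₀ : IsLeast 𝔄 f₀) {k : ℕ} (hk : k ≤ m) {x : Symb m n →₀ M}
    (hx : x ∈ Finsupp.supported M ℤ (contracted r A 𝔄 f₀ t k)) (hcycle : boundary M x = 0)
    (hdeg : t = 0 → Finsupp.degree x = 0) :
    ∃ y ∈ Finsupp.supported M ℤ {S | Cond m n r A 𝔄 (t + 1) S}, boundary M y = x := by
  induction hk using Nat.decreasingInduction generalizing x with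
  | self => exact ⟨0, zero_mem _, by rw [eq_zero_of_mem_supported_contracted hx hdeg, map_zero]⟩
  | of_succ k hk ih =>
    let p : Fin m × Fin n := (⟨k, hk⟩, f₀ ⟨k, hk⟩)
    have hhomotopy : boundary M (insertion p x) = x - collapse p x := by
      rw [← boundary_insertion_add_insertion_boundary
        (Finsupp.supported_mono (fun S hS => hS.1.2.1 p.1) hx), hcycle, map_zero, add_zero]
    have hcycle' : boundary M (collapse p x) = 0 := by
      rw [← sub_sub_self x (collapse p x), ← hhomotopy, map_sub, hcycle, boundary_boundary,
        sub_zero]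
    have hdeg' (ht : t = 0) : Finsupp.degree (collapse p x) = 0 := by
      subst ht
      rw [degree_collapse (Finsupp.supported_mono (fun S hS => hS.1.card_eq_one p.1) hx), hdeg rfl]
    obtain ⟨y, hy, hyx⟩ := ih (collapse_mem_supported hcompat h𝔄 hf₀ hx) hcycle' hdeg'
    refine ⟨insertion p x + y, add_mem (insertion_mem_supported hcompat h𝔄 hf₀ hx) hy, ?_⟩
    rw [map_add, hhomotopy, hyx, sub_add_cancel]

theorem exists_boundary_eq (hcompat : ∀ i j, r i j → i ≤ j) (h𝔄 : IsPosetIdeal r A 𝔄)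
    {x : Symb m n →₀ M} (hx : x ∈ Finsupp.supported M ℤ {S | Cond m n r A 𝔄 t S})
    (hcycle : boundary M x = 0) (hdeg : t = 0 → Finsupp.degree x = 0) :
    ∃ y ∈ Finsupp.supported M ℤ {S | Cond m n r A 𝔄 (t + 1) S}, boundary M y = x := by
  obtain rfl | hne := 𝔄.eq_empty_or_nonempty
  · obtain rfl : x = 0 := by simpa [Cond] using hx
    exact ⟨0, zero_mem _, map_zero _⟩
  · obtain ⟨f₀, hf₀⟩ := h𝔄.exists_isLeast hne
    refine exists_boundary_eq_of_mem_supported_contracted hcompat h𝔄 hf₀ (Nat.zero_le m) ?_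
      hcycle hdeg
    simpa [contracted] using hx

end Symb

end Exactness

section Multigrading

variable {K m n}

namespace Symb

/-- The exponent vector of the multidegree `∏ᵢ ∏_{a ∈ Kᵢ} X_{pᵢ,a}` of a symbol. -/
def multidegree (S : Symb m n) : Fin m × Fin n →₀ ℕ :=
  ∑ p ∈ S.cells, Finsupp.single p 1

theorem multidegree_le_iff {S : Symb m n} {u : Fin m × Fin n →₀ ℕ} :
    S.multidegree ≤ u ↔ ∀ i, ∀ a ∈ S i, u (i, a) ≠ 0 := by
  have happly (p : Fin m × Fin n) : S.multidegree p = if p.2 ∈ S p.1 then 1 else 0 := by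
    simp [multidegree, Finsupp.finsetSum_apply, Finsupp.single_apply]
  simp only [Finsupp.le_def, happly, Prod.forall]
  refine forall₂_congr fun i a => ?_
  split_ifs with h <;> simp [h, Nat.one_le_iff_ne_zero]

theorem multidegree_erase {S : Symb m n} {p : Fin m × Fin n} (hp : p.2 ∈ S p.1) :
    (S.erase p).multidegree + Finsupp.single p 1 = S.multidegree := by
  rw [multidegree, cells_erase, Finset.sum_erase_add _ _ (mem_cells.2 hp), multidegree]

theorem monomial_multidegree (S : Symb m n) :
    monomial S.multidegree (1 : K) = ∏ i, ∏ a ∈ S i, X (i, a) := by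
  rw [multidegree, monomial_sum_one]
  exact Finset.prod_finset_product S.cells Finset.univ S (by simp)

end Symb

open Symb

theorem Dmap_single (S : Symb m n) (c : MvPolynomial (Fin m × Fin n) K) :
    Dmap K m n (Finsupp.single S c) =
      ∑ p ∈ S.removable, Finsupp.single (S.erase p) (S.sign p • (c * X p)) := by
  rw [Dmap, Finsupp.linearCombination_single, removable, Finset.sum_filter,
    Finset.sum_finset_product S.cells Finset.univ S (by simp), Finset.smul_sum]
  refine Finset.sum_congr rfl fun i _ => ?_
  rw [Finset.smul_sum]
  refine Finset.sum_congr rfl fun a _ => ?_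
  rw [smul_ite, smul_zero, smul_smul, Finsupp.smul_single, smul_eq_mul, mul_one, mul_left_comm,
    sign, zsmul_eq_mul, Int.cast_pow, Int.cast_neg, Int.cast_one]
  rfl

theorem Emap_single (S : Symb m n) (c : MvPolynomial (Fin m × Fin n) K) :
    Emap K m n (Finsupp.single S c) = c * monomial S.multidegree 1 := by
  rw [Emap, Finsupp.linearCombination_single, smul_eq_mul, monomial_multidegree]

/-- Dehomogenization: the embedding of the complex into the one with all variables of the
differential set to `1`, scaling each symbol by its multidegree. -/
def dehomogenize : SymbMod K m n →ₗ[MvPolynomial (Fin m × Fin n) K] SymbMod K m n :=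
  Finsupp.linearCombination _ fun S : Symb m n => Finsupp.single S (monomial S.multidegree 1)

theorem dehomogenize_single (S : Symb m n) (c : MvPolynomial (Fin m × Fin n) K) :
    dehomogenize (Finsupp.single S c) = Finsupp.single S (c * monomial S.multidegree 1) := by
  simp [dehomogenize]

theorem dehomogenize_apply (x : SymbMod K m n) (S : Symb m n) :
    dehomogenize x S = x S * monomial S.multidegree 1 := by
  induction x using Finsupp.induction_linear with
  | zero => simp
  | add x y hx hy => rw [map_add, Finsupp.add_apply, hx, hy, Finsupp.add_apply, add_mul]
  | single T c =>
    rw [dehomogenize_single]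
    obtain rfl | h := eq_or_ne T S
    · simp
    · simp [Finsupp.single_eq_of_ne' h]

theorem dehomogenize_injective : Function.Injective (dehomogenize : SymbMod K m n → _) := by
  intro x y h
  ext1 S
  have hS := DFunLike.congr_fun h S
  rw [dehomogenize_apply, dehomogenize_apply] at hS
  exact mul_right_cancel₀ (by simp) hS

theorem dehomogenize_mem_supported_iff {s : Set (Symb m n)} {x : SymbMod K m n} :
    dehomogenize x ∈ Finsupp.supported _ (MvPolynomial (Fin m × Fin n) K) s ↔
      x ∈ Finsupp.supported _ (MvPolynomial (Fin m × Fin n) K) s := by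
  simp [Finsupp.mem_supported', dehomogenize_apply]

theorem exists_dehomogenize_eq {w : SymbMod K m n}
    (hw : ∀ S : Symb m n, monomial S.multidegree 1 ∣ w S) : ∃ x, dehomogenize x = w := by
  choose c hc using hw
  refine ⟨Finsupp.equivFunOnFinite.symm c, Finsupp.ext fun S => ?_⟩
  rw [dehomogenize_apply, hc, mul_comm]
  rfl

theorem boundary_dehomogenize (x : SymbMod K m n) :
    boundary _ (dehomogenize x) = dehomogenize (Dmap K m n x) := by
  induction x using Finsupp.induction_linear with
  | zero => simp
  | add x y hx hy => simp only [map_add, hx, hy]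
  | single S c =>
    rw [dehomogenize_single, boundary_single, Dmap_single, map_sum]
    refine Finset.sum_congr rfl fun p hp => ?_
    rw [dehomogenize_single, ← multidegree_erase (mem_removable.1 hp).1, monomial_add_single,
      pow_one, smul_mul_assoc, mul_assoc, mul_comm (X p)]

theorem degree_dehomogenize (x : SymbMod K m n) :
    Finsupp.degree (dehomogenize x) = Emap K m n x := by
  induction x using Finsupp.induction_linear with
  | zero => simp
  | add x y hx hy => simp only [map_add, hx, hy]
  | single S c => rw [dehomogenize_single, Finsupp.degree_single, Emap_single]

end Multigrading

section Resolution

variable {K m n} {r : Fin m → Fin m → Prop} {A : Fin m → Finset (Fin n)}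
  {𝔄 : Set (Fin m → Fin n)} {t : ℕ}

open Symb

theorem FMod_eq_supported : FMod K m n r A 𝔄 t =
    Finsupp.supported _ (MvPolynomial (Fin m × Fin n) K) {S | Cond m n r A 𝔄 t S} := by
  simp only [FMod, Finsupp.supported_eq_span_single, Set.image, Set.mem_ofPred_eq, eq_comm]

theorem Dmap_mem_FMod (h𝔄 : IsPosetIdeal r A 𝔄) {x : SymbMod K m n}
    (hx : x ∈ FMod K m n r A 𝔄 (t + 1)) : Dmap K m n x ∈ FMod K m n r A 𝔄 t := by
  rw [FMod_eq_supported] at hx ⊢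
  refine map_mem_of_mem_supported _ (fun S hS c => ?_) hx
  rw [Dmap_single]
  exact sum_mem fun p hp => Finsupp.single_mem_supported _ _ (hS.erase h𝔄 hp)

theorem Dmap_eq_zero_of_mem_FMod_zero {x : SymbMod K m n} (hx : x ∈ FMod K m n r A 𝔄 0) :
    Dmap K m n x = 0 := by
  rw [FMod_eq_supported] at hx
  refine (Submodule.mem_bot _).1 (map_mem_of_mem_supported _ (fun (S : Symb m n) hS c => ?_) hx)
  have hempty : S.removable = ∅ :=
    Finset.eq_empty_of_forall_notMem fun p hp => by
      have := (mem_removable.1 hp).2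
      have := hS.card_eq_one p.1
      omega
  rw [Dmap_single, hempty, Finset.sum_empty]
  exact zero_mem _

theorem map_Emap_FMod_zero (h𝔄 : IsPosetIdeal r A 𝔄) :
    (FMod K m n r A 𝔄 0).map (Emap K m n) =
      Ideal.span ((fun f : Fin m → Fin n => ∏ i, X (i, f i)) '' 𝔄) := by
  have hgen : {x | ∃ S, Cond m n r A 𝔄 0 S ∧
      x = Finsupp.single S (1 : MvPolynomial (Fin m × Fin n) K)} =
      (fun f : Fin m → Fin n => Finsupp.single (fun i => {f i}) 1) '' 𝔄 := by
    ext x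
    simp only [Cond.zero_iff h𝔄, Set.mem_ofPred_eq, Set.mem_image]
    grind
  rw [FMod, hgen, Submodule.map_span, Set.image_image, Ideal.span]
  simp [Emap]

theorem constantCoeff_Dmap_single_one (S T : Symb m n) :
    constantCoeff (Dmap K m n (Finsupp.single S 1) T) = 0 := by
  rw [Dmap_single, Finsupp.finsetSum_apply, map_sum]
  refine Finset.sum_eq_zero fun p _ => ?_
  rw [Finsupp.single_apply]
  split_ifs <;> simp

theorem exists_boundary_eq_mapRange_coeff (hcompat : ∀ i j, r i j → i ≤ j)
    (h𝔄 : IsPosetIdeal r A 𝔄) {x : SymbMod K m n} (hx : x ∈ FMod K m n r A 𝔄 t)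
    (hcycle : Dmap K m n x = 0) (haug : t = 0 → Emap K m n x = 0) (u : Fin m × Fin n →₀ ℕ) :
    ∃ z ∈ Finsupp.supported K ℤ {S : Symb m n | Cond m n r A 𝔄 (t + 1) S ∧ S.multidegree ≤ u},
      boundary K z = Finsupp.mapRange.addMonoidHom (coeffAddMonoidHom u) (dehomogenize x) := by
  let U (i : Fin m) : Finset (Fin n) := (A i).filter fun a => u (i, a) ≠ 0
  have hUA (i : Fin m) : U i ⊆ A i := Finset.filter_subset _ _
  have hrestrict (s : ℕ) : {S | Cond m n r U {f ∈ 𝔄 | ∀ i, f i ∈ U i} s S} =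
      {S : Symb m n | Cond m n r A 𝔄 s S ∧ S.multidegree ≤ u} := by
    ext S
    rw [Set.mem_ofPred_eq, Set.mem_ofPred_eq, Cond.restrict_iff hUA, multidegree_le_iff]
    refine and_congr_right fun hS => forall_congr' fun i => ?_
    simp only [U, Finset.subset_iff, Finset.mem_filter]
    exact forall₂_congr fun a ha => and_iff_right (hS.1 i ha)
  rw [← hrestrict]
  refine exists_boundary_eq hcompat (h𝔄.restrict hUA) ?_ ?_ fun ht => ?_
  · rw [hrestrict, Finsupp.mem_supported']
    rw [FMod_eq_supported, Finsupp.mem_supported'] at hx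
    intro S hS
    rw [Finsupp.mapRange.addMonoidHom_apply, Finsupp.mapRange_apply, dehomogenize_apply,
      coeffAddMonoidHom_apply, coeff_mul_monomial']
    split_ifs with hu
    · rw [hx S fun h => hS ⟨h, hu⟩, coeff_zero, zero_mul]
    · rfl
  · rw [boundary_mapRange, boundary_dehomogenize, hcycle, map_zero, map_zero]
  · rw [degree_mapRange, degree_dehomogenize, haug ht, map_zero]

theorem exists_Dmap_eq (hcompat : ∀ i j, r i j → i ≤ j) (h𝔄 : IsPosetIdeal r A 𝔄)
    {x : SymbMod K m n} (hx : x ∈ FMod K m n r A 𝔄 t) (hcycle : Dmap K m n x = 0)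
    (haug : t = 0 → Emap K m n x = 0) : ∃ y ∈ FMod K m n r A 𝔄 (t + 1), Dmap K m n y = x := by
  choose z hz hzx using exists_boundary_eq_mapRange_coeff hcompat h𝔄 hx hcycle haug
  simp only [Finsupp.mem_supported'] at hz
  let W := Finset.univ.biUnion fun S : Symb m n => (dehomogenize x S).support
  let v : SymbMod K m n := ∑ u ∈ W,
    Finsupp.mapRange.addMonoidHom (monomial u : K →ₗ[K] _).toAddMonoidHom (z u)
  have hv (S : Symb m n) : v S = ∑ u ∈ W, monomial u (z u S) := by
    simp [v, Finsupp.finsetSum_apply]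
  have hvx : boundary _ v = dehomogenize x := by
    simp only [v, map_sum, boundary_mapRange, hzx]
    exact sum_mapRange_monomial_coeff _ fun S =>
      Finset.subset_biUnion_of_mem (fun S : Symb m n => (dehomogenize x S).support)
        (Finset.mem_univ S)
  have hdvd (S : Symb m n) : monomial S.multidegree 1 ∣ v S := by
    rw [hv]
    refine Finset.dvd_sum fun u _ => monomial_dvd_monomial.2 ⟨?_, one_dvd _⟩
    exact or_iff_not_imp_right.2 fun hu => hz u S fun h => hu h.2
  obtain ⟨y, hy⟩ := exists_dehomogenize_eq hdvd
  refine ⟨y, ?_, dehomogenize_injective ?_⟩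
  · rw [FMod_eq_supported, ← dehomogenize_mem_supported_iff, hy, Finsupp.mem_supported']
    intro S hS
    rw [hv]
    exact Finset.sum_eq_zero fun u _ => by rw [hz u S fun h => hS h.1, map_zero]
  · rw [← boundary_dehomogenize, hy, hvx]

end Resolution

/-- the complex of Construction 4.1 is a minimal multigraded free
resolution of `L(𝔄)`: the differential maps `F (t+1)` into `F t`, the
augmentation maps `F 0` onto `L(𝔄)`, the sequence is exact at every `F t`,
and it is minimal (all entries of the differential have zero constant term). -/
theorem stmt7 (r : Fin m → Fin m → Prop)
    (hrefl : ∀ i, r i i) (htrans : ∀ i j k, r i j → r j k → r i k)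
    (hcompat : ∀ i j, r i j → i ≤ j)
    (A : Fin m → Finset (Fin n)) (hA : ∀ i, (A i).Nonempty)
    (𝔄 : Set (Fin m → Fin n)) (h𝔄ne : 𝔄.Nonempty)
    (hsub : ∀ f ∈ 𝔄, (∀ i, f i ∈ A i) ∧ (∀ i j, r i j → f i ≤ f j))
    (hdown : ∀ f ∈ 𝔄, ∀ g : Fin m → Fin n, (∀ i, g i ∈ A i) →
      (∀ i j, r i j → g i ≤ g j) → (∀ i, g i ≤ f i) → g ∈ 𝔄) :
    -- the differential respects the admissible spans
    (∀ t : ℕ, ∀ x ∈ FMod K m n r A 𝔄 (t + 1), Dmap K m n x ∈ FMod K m n r A 𝔄 t) ∧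
    -- the augmentation maps `F 0` onto `L(𝔄)`
    (Submodule.map (Emap K m n) (FMod K m n r A 𝔄 0) =
      Ideal.span ((fun f : Fin m → Fin n =>
        ∏ i : Fin m, (X (i, f i) : MvPolynomial (Fin m × Fin n) K)) '' 𝔄)) ∧
    -- exactness at `F 0`
    (∀ x ∈ FMod K m n r A 𝔄 0, Emap K m n x = 0 →
      ∃ y ∈ FMod K m n r A 𝔄 1, Dmap K m n y = x) ∧
    -- exactness at `F (t+1)` (including injectivity at the top)
    (∀ t : ℕ, ∀ x ∈ FMod K m n r A 𝔄 (t + 1), Dmap K m n x = 0 →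
      ∃ y ∈ FMod K m n r A 𝔄 (t + 2), Dmap K m n y = x) ∧
    -- minimality
    (∀ Kf Kg : Fin m → Finset (Fin n),
      constantCoeff ((Dmap K m n
        (Finsupp.single Kf (1 : MvPolynomial (Fin m × Fin n) K))) Kg) = 0) := by
  have h𝔄 : IsPosetIdeal r A 𝔄 :=
    ⟨fun f hf => (hsub f hf).1, fun f hf => (hsub f hf).2, hdown⟩
  refine ⟨fun t x hx => Dmap_mem_FMod h𝔄 hx, map_Emap_FMod_zero h𝔄, fun x hx haug => ?_,
    fun t x hx hcycle => ?_, constantCoeff_Dmap_single_one⟩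
  · exact exists_Dmap_eq hcompat h𝔄 hx (Dmap_eq_zero_of_mem_FMod_zero hx) fun _ => haug
  · exact exists_Dmap_eq hcompat h𝔄 hx hcycle fun ht => absurd ht t.succ_ne_zero

end
end
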